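/- arXiv:2010.07364 — 13 statements merged into one kernel-verified Lean document; each statement's English description precedes it below -/
import Mathlib

section
/- Let p be an odd prime and let α, β ∈ ℚ_p be two p-adic numbers whose Browkin continued fraction algorithms do not terminate before step n. If α and β have the same first n+1 Browkin partial quotients (equivalently, the same n-th convergent), then |α − β|_p < p^{−2n}. -/
/-- `y ∈ 𝒴 = ℤ[1/p] ∩ (−p/2, p/2)`: a possible Browkin partial quotient. -/
def IsBrowkinDigit (p : ℕ) (y : ℚ) : Prop :=
  (∃ z : ℤ, ∃ j : ℕ, y = (z : ℚ) / (p : ℚ) ^ j) ∧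
  -(p : ℚ) / 2 < y ∧ y < (p : ℚ) / 2

/-- `αs` is the sequence of complete quotients and `a` the sequence of partial
quotients of the (non-terminating) Browkin continued fraction algorithm:
`a n = s (αs n)` (i.e. `a n ∈ 𝒴` and `|αs n − a n|_p < 1`) and
`αs (n+1) = 1/(αs n − a n)`. -/
def IsBCF (p : ℕ) [Fact p.Prime] (αs : ℕ → ℚ_[p]) (a : ℕ → ℚ) : Prop :=
  ∀ n, IsBrowkinDigit p (a n) ∧ ‖αs n - (a n : ℚ_[p])‖ < 1 ∧
    αs (n + 1) = (αs n - (a n : ℚ_[p]))⁻¹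

/-- if two p-adic numbers, whose Browkin algorithms do not terminate
before step `n`, have the same first `n+1` partial quotients, then
`|α − β|_p < p^(−2n)`. -/
theorem browkin_same_convergent_close
    (p : ℕ) [Fact p.Prime] (hp : Odd p) (n : ℕ)
    (α β : ℚ_[p]) (αs βs : ℕ → ℚ_[p]) (a b : ℕ → ℚ)
    (hα0 : αs 0 = α) (hβ0 : βs 0 = β)
    (hαdig : ∀ j ≤ n, IsBrowkinDigit p (a j) ∧ ‖αs j - (a j : ℚ_[p])‖ < 1)
    (hβdig : ∀ j ≤ n, IsBrowkinDigit p (b j) ∧ ‖βs j - (b j : ℚ_[p])‖ < 1)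
    (hαstep : ∀ j < n, αs j ≠ (a j : ℚ_[p]) ∧ αs (j + 1) = (αs j - (a j : ℚ_[p]))⁻¹)
    (hβstep : ∀ j < n, βs j ≠ (b j : ℚ_[p]) ∧ βs (j + 1) = (βs j - (b j : ℚ_[p]))⁻¹)
    (heq : ∀ j ≤ n, a j = b j) :
    ‖α - β‖ < (p : ℝ) ^ (-(2 * n : ℤ)) := by
  have hp0 : (0 : ℝ) < p := by exact_mod_cast (Fact.out : p.Prime).pos
  have small : ∀ x : ℚ_[p], ‖x‖ < 1 → ‖x‖ ≤ (p : ℝ) ^ (-1 : ℤ) := by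
    intro x hx
    rw [Padic.norm_le_pow_iff_norm_lt_pow_add_one]
    simpa using hx
  have key : ∀ k : ℕ, ∀ j : ℕ, j + k = n → ‖αs j - βs j‖ < (p : ℝ) ^ (-(2 * k : ℤ)) := by
    intro k
    induction k with
    | zero =>
      intro j hj
      have h1 := (hαdig j (by omega)).2
      have h2 := (hβdig j (by omega)).2
      rw [← heq j (by omega)] at h2
      have h3 : αs j - βs j = (αs j - (a j : ℚ_[p])) + -(βs j - (a j : ℚ_[p])) := by ring
      have h4 := Padic.nonarchimedean (αs j - (a j : ℚ_[p])) (-(βs j - (a j : ℚ_[p])))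
      rw [← h3, norm_neg] at h4
      simpa using lt_of_le_of_lt h4 (max_lt h1 h2)
    | succ k ih =>
      intro j hj
      have h1 := (hαdig j (by omega)).2
      have h2 := (hβdig j (by omega)).2
      obtain ⟨n1, s1⟩ := hαstep j (by omega)
      obtain ⟨n2, s2⟩ := hβstep j (by omega)
      rw [← heq j (by omega)] at h2 n2 s2
      have h := ih (j + 1) (by omega)
      rw [s1, s2] at h
      have n1' := sub_ne_zero.mpr n1
      have n2' := sub_ne_zero.mpr n2
      have e : αs j - βs j = (αs j - (a j : ℚ_[p])) - (βs j - (a j : ℚ_[p])) := by ring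
      rw [e]
      generalize αs j - (a j : ℚ_[p]) = x at *
      generalize βs j - (a j : ℚ_[p]) = y at *
      have e2 : x - y = -(x * y * (x⁻¹ - y⁻¹)) := by
        field_simp
        ring
      rw [e2, norm_neg, norm_mul, norm_mul]
      have e3 : (p : ℝ) ^ (-(2 * ((k + 1 : ℕ) : ℤ))) =
          (p : ℝ) ^ (-1 : ℤ) * (p : ℝ) ^ (-1 : ℤ) * (p : ℝ) ^ (-(2 * k : ℤ)) := by
        rw [← zpow_add₀ hp0.ne', ← zpow_add₀ hp0.ne']
        congr 1
        push_cast
        ring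
      rw [e3]
      have hx := small x h1
      have hy := small y h2
      have hpos : (0 : ℝ) < (p : ℝ) ^ (-1 : ℤ) := zpow_pos hp0 _
      exact mul_lt_mul' (mul_le_mul hx hy (norm_nonneg _) hpos.le) h (norm_nonneg _)
        (mul_pos hpos hpos)
  have := key n 0 (by omega)
  rwa [hα0, hβ0] at this
end

section
/- Let p be an odd prime and α ∈ ℚ_p a quadratic irrational with conjugate α^c, BCF complete quotients (α_n) and conjugate complete quotients (α_n^c). Assume v_p(α) < 0 and v_p(α^c) > 0. Then for every n ≥ 0 one has v_p(α_n) < 0 and v_p(α_n^c) > 0; moreover v_p(α_{n+1}^c) = −v_p(α_n). -/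
theorem valuation_pos_iff_norm {p : ℕ} [Fact p.Prime] {x : ℚ_[p]} (hx : x ≠ 0) :
    0 < x.valuation ↔ ‖x‖ < 1 := by
  have hp1 : (1 : ℝ) < p := by exact_mod_cast (Fact.out : p.Prime).one_lt
  rw [Padic.norm_eq_zpow_neg_valuation hx, ← zpow_zero (p : ℝ), zpow_lt_zpow_iff_right₀ hp1]
  omega

theorem valuation_eq_of_norm_eq {p : ℕ} [Fact p.Prime] {x y : ℚ_[p]} (hx : x ≠ 0) (hy : y ≠ 0)
    (h : ‖x‖ = ‖y‖) : x.valuation = y.valuation := by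
  have hp1 : (1 : ℝ) < p := by exact_mod_cast (Fact.out : p.Prime).one_lt
  rw [Padic.norm_eq_zpow_neg_valuation hx, Padic.norm_eq_zpow_neg_valuation hy] at h
  have := (zpow_right_strictMono₀ hp1).injective h
  omega

theorem browkin_step {p : ℕ} [Fact p.Prime] {x y a : ℚ_[p]} (hd : ‖x - a‖ < 1)
    (hx : x.valuation < 0) (hy : 0 < y.valuation) : (y - a)⁻¹.valuation = -x.valuation := by
  have hy0 : y ≠ 0 := by rintro rfl; simp at hy
  have hx0 : x ≠ 0 := by rintro rfl; simp at hx
  have hyn := (valuation_pos_iff_norm hy0).1 hy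
  have hxn : 1 < ‖x‖ := by
    by_contra! h
    have := (Padic.norm_le_one_iff_val_nonneg x).1 h
    omega
  have h1 : ‖(y - a) - (-x)‖ < ‖-x‖ := by
    have e : (y - a) - (-x) = y + (x - a) := by ring
    rw [e, norm_neg]
    exact lt_of_le_of_lt (Padic.nonarchimedean _ _) ((max_lt hyn hd).trans hxn)
  have h2 : ‖y - a‖ = ‖x‖ := by
    rw [Padic.norm_eq_of_norm_sub_lt_right h1, norm_neg]
  have h3 : y - a ≠ 0 := by
    rw [← norm_pos_iff, h2]; linarith
  rw [Padic.valuation_inv, valuation_eq_of_norm_eq h3 hx0 h2]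

/-- if `v_p(α) < 0` and `v_p(α^c) > 0`, then for every `n ≥ 0` one has
`v_p(α_n) < 0` and `v_p(α_n^c) > 0`; moreover `v_p(α_{n+1}^c) = −v_p(α_n)`. -/
theorem browkin_regular_propagates
    (p : ℕ) [Fact p.Prime] (hp : Odd p)
    (α : ℚ_[p]) (hirr : ∀ q : ℚ, α ≠ (q : ℚ_[p]))
    (tr nm : ℚ) (hquad : α ^ 2 - (tr : ℚ_[p]) * α + (nm : ℚ_[p]) = 0)
    (αc : ℚ_[p]) (hαc : αc = (tr : ℚ_[p]) - α)
    (αs : ℕ → ℚ_[p]) (a : ℕ → ℚ) (hα0 : αs 0 = α) (hbcf : IsBCF p αs a)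
    (αcs : ℕ → ℚ_[p]) (hαc0 : αcs 0 = αc)
    (hαcstep : ∀ n, αcs (n + 1) = (αcs n - (a n : ℚ_[p]))⁻¹)
    (hv : α.valuation < 0) (hvc : 0 < αc.valuation) :
    ∀ n : ℕ, (αs n).valuation < 0 ∧ 0 < (αcs n).valuation ∧
      (αcs (n + 1)).valuation = -(αs n).valuation := by
  have hI : ∀ n, ∀ q : ℚ, αs n ≠ (q : ℚ_[p]) := by
    intro n
    induction n with
    | zero => rw [hα0]; exact hirr
    | succ n ih =>
      intro q hq
      rw [(hbcf n).2.2] at hq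
      apply ih (q⁻¹ + a n)
      push_cast
      rw [← hq, inv_inv]
      ring
  have hV : ∀ n, (αs n).valuation < 0 ∧ 0 < (αcs n).valuation := by
    intro n
    induction n with
    | zero => rw [hα0, hαc0]; exact ⟨hv, hvc⟩
    | succ n ih =>
      obtain ⟨-, hd, hs⟩ := hbcf n
      have hd0 : αs n - (a n : ℚ_[p]) ≠ 0 := sub_ne_zero.2 (hI n (a n))
      have hpos := (valuation_pos_iff_norm hd0).2 hd
      refine ⟨?_, ?_⟩
      · rw [hs, Padic.valuation_inv]; omega
      · rw [hαcstep, browkin_step hd ih.1 ih.2]; omega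
  intro n
  refine ⟨(hV n).1, (hV n).2, ?_⟩
  rw [hαcstep, browkin_step (hbcf n).2.1 (hV n).1 (hV n).2]
end

section
/- Let p be an odd prime and α ∈ ℚ_p a quadratic irrational with conjugate α^c, BCF partial quotients (a_n), complete quotients (α_n) and conjugate complete quotients (α_n^c). Assume v_p(α) < 0 and v_p(α^c) > 0, and set β_n = −1/α_n^c. Then for every n ≥ 0 one has β_{n+1} = a_n + 1/β_n, and a_n is the Browkin digit of β_{n+1}, i.e., s(β_{n+1}) = a_n (equivalently |β_{n+1} − a_n|_p < 1). Consequently −1/α_{n+1}^c = [a_n, a_{n−1}, …, a_0, −1/α^c] as a finite continued fraction. -/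
/-- if `v_p(α) < 0` and `v_p(α^c) > 0`, then setting
`β_n = −1/α_n^c` one has `β_{n+1} = a_n + 1/β_n`, and `a_n` is the Browkin digit
of `β_{n+1}` (`a_n ∈ 𝒴` holds by hypothesis, and `|β_{n+1} − a_n|_p < 1`); hence
`−1/α_{n+1}^c = [a_n, a_{n−1}, …, a_0, −1/α^c]` as a finite continued fraction. -/
theorem browkin_conjugate_reversed_digits
    (p : ℕ) [Fact p.Prime] (hp : Odd p)
    (α : ℚ_[p]) (hirr : ∀ q : ℚ, α ≠ (q : ℚ_[p]))
    (tr nm : ℚ) (hquad : α ^ 2 - (tr : ℚ_[p]) * α + (nm : ℚ_[p]) = 0)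
    (αc : ℚ_[p]) (hαc : αc = (tr : ℚ_[p]) - α)
    (αs : ℕ → ℚ_[p]) (a : ℕ → ℚ) (hα0 : αs 0 = α) (hbcf : IsBCF p αs a)
    (αcs : ℕ → ℚ_[p]) (hαc0 : αcs 0 = αc)
    (hαcstep : ∀ n, αcs (n + 1) = (αcs n - (a n : ℚ_[p]))⁻¹)
    (hv : α.valuation < 0) (hvc : 0 < αc.valuation)
    (βs : ℕ → ℚ_[p]) (hβ : ∀ n, βs n = -(αcs n)⁻¹) :
    ∀ n : ℕ, βs (n + 1) = (a n : ℚ_[p]) + (βs n)⁻¹ ∧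
      ‖βs (n + 1) - (a n : ℚ_[p])‖ < 1 := by
  have hp1 : (1 : ℝ) < p := by exact_mod_cast (Fact.out : p.Prime).one_lt
  have key : ∀ n, (∀ q : ℚ, αs n ≠ (q : ℚ_[p])) ∧ 1 < ‖αs n‖ ∧ ‖αcs n‖ < 1 := by
    intro n
    induction n with
    | zero =>
      rw [hα0, hαc0]
      refine ⟨hirr, ?_, ?_⟩
      · have h0 : α ≠ 0 := by
          rintro rfl
          simp at hv
        rw [Padic.norm_eq_zpow_neg_valuation h0]
        exact one_lt_zpow₀ hp1 (by omega)
      · have h0 : αc ≠ 0 := by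
          intro h
          rw [h] at hvc
          simp at hvc
        rw [Padic.norm_eq_zpow_neg_valuation h0]
        exact zpow_lt_one_of_neg₀ hp1 (by omega)
    | succ n ih =>
      obtain ⟨h1, h2, h3⟩ := ih
      obtain ⟨-, h4, h5⟩ := hbcf n
      have hne : αs n - (a n : ℚ_[p]) ≠ 0 := sub_ne_zero.mpr (h1 _)
      have ha : 1 < ‖(a n : ℚ_[p])‖ := by
        by_contra! hcon
        have := Padic.nonarchimedean (αs n - (a n : ℚ_[p])) (a n : ℚ_[p])
        rw [sub_add_cancel] at this
        have := this.trans (max_le h4.le hcon)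
        linarith
      have hc : 1 < ‖αcs n - (a n : ℚ_[p])‖ := by
        by_contra! hcon
        have := Padic.nonarchimedean (αcs n) (-(αcs n - (a n : ℚ_[p])))
        rw [norm_neg, neg_sub, add_sub_cancel] at this
        have := this.trans (max_le h3.le hcon)
        linarith
      refine ⟨?_, ?_, ?_⟩
      · intro q hq
        rw [h5] at hq
        apply h1 (q⁻¹ + a n)
        push_cast
        rw [← hq, inv_inv]
        ring
      · rw [h5, norm_inv]
        exact (one_lt_inv₀ (norm_pos_iff.mpr hne)).mpr h4
      · rw [hαcstep, norm_inv]
        exact inv_lt_one_of_one_lt₀ hc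
  intro n
  have e : βs (n + 1) = (a n : ℚ_[p]) - αcs n := by
    rw [hβ, hαcstep, inv_inv]
    ring
  refine ⟨?_, ?_⟩
  · rw [e, hβ, inv_neg, inv_inv]
    ring
  · rw [e, sub_sub_cancel_left, norm_neg]
    exact (key n).2.2
end

section
/- Let p be an odd prime and α ∈ ℚ_p a quadratic irrational with conjugate α^c, BCF complete quotients (α_j) and conjugate complete quotients (α_j^c). If |α − α^c|_p ≥ p^{−2n} for some n ≥ 0, then α_{n+2} is regular: v_p(α_{n+2}) < 0 and v_p(α_{n+2}^c) > 0. -/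
theorem browkin_sub_eq_max {p : ℕ} [Fact p.Prime] {x y : ℚ_[p]} (h : ‖x‖ ≠ ‖y‖) :
    ‖x - y‖ = max ‖x‖ ‖y‖ := by
  have := Padic.add_eq_max_of_ne (q := x) (r := -y) (by rwa [norm_neg])
  rwa [norm_neg, ← sub_eq_add_neg] at this

theorem browkin_sub_le_max {p : ℕ} [Fact p.Prime] (x y : ℚ_[p]) :
    ‖x - y‖ ≤ max ‖x‖ ‖y‖ := by
  have := Padic.nonarchimedean x (-y)
  rwa [norm_neg, ← sub_eq_add_neg] at this

theorem browkin_irr (p : ℕ) [Fact p.Prime] (x : ℚ_[p]) (hx : ∀ q : ℚ, x ≠ (q : ℚ_[p]))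
    (xs : ℕ → ℚ_[p]) (a : ℕ → ℚ) (h0 : xs 0 = x)
    (hs : ∀ n, xs (n + 1) = (xs n - (a n : ℚ_[p]))⁻¹) (k : ℕ) :
    ∀ q : ℚ, xs k ≠ (q : ℚ_[p]) := by
  induction k with
  | zero => rwa [h0]
  | succ k ih =>
    intro q hq
    apply ih (q⁻¹ + a k)
    rw [hs] at hq
    push_cast
    rw [← hq, inv_inv]; ring

/-- if `|α − α^c|_p ≥ p^(−2n)`, then the complete quotient
`α_{n+2}` is regular: `v_p(α_{n+2}) < 0` and `v_p(α_{n+2}^c) > 0`. -/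
theorem browkin_eventually_regular
    (p : ℕ) [Fact p.Prime] (hp : Odd p)
    (α : ℚ_[p]) (hirr : ∀ q : ℚ, α ≠ (q : ℚ_[p]))
    (tr nm : ℚ) (hquad : α ^ 2 - (tr : ℚ_[p]) * α + (nm : ℚ_[p]) = 0)
    (αc : ℚ_[p]) (hαc : αc = (tr : ℚ_[p]) - α)
    (αs : ℕ → ℚ_[p]) (a : ℕ → ℚ) (hα0 : αs 0 = α) (hbcf : IsBCF p αs a)
    (αcs : ℕ → ℚ_[p]) (hαc0 : αcs 0 = αc)
    (hαcstep : ∀ n, αcs (n + 1) = (αcs n - (a n : ℚ_[p]))⁻¹)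
    (n : ℕ) (hfar : (p : ℝ) ^ (-(2 * n : ℤ)) ≤ ‖α - αc‖) :
    (αs (n + 2)).valuation < 0 ∧ 0 < (αcs (n + 2)).valuation := by
  have hp1 : (1 : ℝ) < p := by exact_mod_cast (Fact.out : p.Prime).one_lt
  have hp0 : (0 : ℝ) < p := by linarith
  have hirrc : ∀ q : ℚ, αc ≠ (q : ℚ_[p]) := by
    intro q hq
    apply hirr (tr - q)
    push_cast
    rw [← hq, hαc]; ring
  have hI := fun k => browkin_irr p α hirr αs a hα0 (fun n => (hbcf n).2.2) k
  have hJ := fun k => browkin_irr p αc hirrc αcs a hαc0 hαcstep k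
  have hne : ∀ k, αs k ≠ 0 := fun k h => hI k 0 (by simpa using h)
  have hnec : ∀ k, αcs k ≠ 0 := fun k h => hJ k 0 (by simpa using h)
  have hbig : ∀ k, (p : ℝ) ≤ ‖αs (k + 1)‖ := by
    intro k
    have h1 := (hbcf k).2.1
    have h2 := (Padic.norm_le_pow_iff_norm_lt_pow_add_one (αs k - (a k : ℚ_[p])) (-1)).2
      (by simpa using h1)
    rw [(hbcf k).2.2, norm_inv]
    rw [zpow_neg_one] at h2
    have h3 : 0 < ‖αs k - (a k : ℚ_[p])‖ := norm_pos_iff.2 (sub_ne_zero.2 (hI k _))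
    exact (le_inv_comm₀ h3 hp0).1 h2
  have hakeq : ∀ k, ‖((a (k + 1) : ℚ) : ℚ_[p])‖ = ‖αs (k + 1)‖ := by
    intro k
    have h1 := (hbcf (k + 1)).2.1
    have h2 := hbig k
    have h3 := browkin_sub_eq_max (x := αs (k + 1))
      (y := αs (k + 1) - (a (k + 1) : ℚ_[p])) (by intro h; linarith)
    rw [sub_sub_cancel, max_eq_left (by linarith)] at h3
    exact h3
  have hstep : ∀ k, ‖αcs (k + 1)‖ < (p : ℝ) → ‖αcs (k + 2)‖ < 1 := by
    intro k h
    have h2 := hbig k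
    have h4 := hakeq k
    have h3 := browkin_sub_eq_max (x := αcs (k + 1))
      (y := (a (k + 1) : ℚ_[p])) (by intro h; linarith)
    rw [max_eq_right (by linarith)] at h3
    rw [hαcstep (k + 1), norm_inv, h3, h4]
    exact inv_lt_one_of_one_lt₀ (by linarith)
  have hpers : ∀ m k, ‖αcs (k + 1)‖ < 1 → ‖αcs (k + 1 + m)‖ < 1 := by
    intro m k h
    induction m with
    | zero => exact h
    | succ m ih =>
      have := hstep (k + m) (by
        rw [show k + m + 1 = k + 1 + m by ring]; linarith)
      rwa [show k + m + 2 = k + 1 + (m + 1) by ring] at this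
  have hsmall : ‖αcs (n + 2)‖ < 1 := by
    by_contra hcon
    have hge : ∀ k, k ≤ n + 1 → 1 ≤ ‖αcs (k + 1)‖ := by
      intro k hk
      by_contra h
      apply hcon
      have := hpers (n + 1 - k) k (not_le.1 h)
      rwa [show k + 1 + (n + 1 - k) = n + 2 by omega] at this
    have hgep : ∀ k, k ≤ n → (p : ℝ) ≤ ‖αcs (k + 1)‖ := by
      intro k hk
      by_contra h
      have := hstep k (not_le.1 h)
      have h2 := hge (k + 1) (by omega)
      exact absurd this (not_lt.2 h2)
    have hd : ∀ k, k ≤ n + 1 → (p : ℝ) ^ (2 * k) * (p : ℝ) ^ (-(2 * n : ℤ)) ≤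
        ‖αs k - αcs k‖ := by
      intro k
      induction k with
      | zero => intro _; simpa [hα0, hαc0] using hfar
      | succ k ih =>
        intro hk
        have h1 := ih (by omega)
        have h2 := hbig k
        have h3 := hgep k (by omega)
        have h4 : αs (k + 1) - αcs (k + 1) = (αcs k - αs k) * (αs (k + 1) * αcs (k + 1)) := by
          have e1 : αs k - (a k : ℚ_[p]) ≠ 0 := sub_ne_zero.2 (hI k _)
          have e2 : αcs k - (a k : ℚ_[p]) ≠ 0 := sub_ne_zero.2 (hJ k _)
          rw [(hbcf k).2.2, hαcstep k]
          field_simp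
          ring
        rw [h4, norm_mul, norm_mul, norm_sub_rev]
        calc (p : ℝ) ^ (2 * (k + 1)) * (p : ℝ) ^ (-(2 * n : ℤ))
            = ((p : ℝ) ^ (2 * k) * (p : ℝ) ^ (-(2 * n : ℤ))) * (p * p) := by ring
          _ ≤ _ := by gcongr
    have h1 := hd (n + 1) le_rfl
    have h2 : (p : ℝ) ^ (2 * (n + 1)) * (p : ℝ) ^ (-(2 * n : ℤ)) = p * p := by
      rw [zpow_neg, show (2 * (n : ℤ)) = ((2 * n : ℕ) : ℤ) by push_cast; rfl, zpow_natCast]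
      field_simp
      ring
    have h3 : ‖αcs (n + 1) - (a (n + 1) : ℚ_[p])‖ ≤ 1 := by
      have := hge (n + 1) le_rfl
      rw [hαcstep (n + 1), norm_inv] at this
      have e : 0 < ‖αcs (n + 1) - (a (n + 1) : ℚ_[p])‖ :=
        norm_pos_iff.2 (sub_ne_zero.2 (hJ _ _))
      exact (one_le_inv₀ e).1 this
    have h4 := (hbcf (n + 1)).2.1
    have h5 := browkin_sub_le_max (αs (n + 1) - (a (n + 1) : ℚ_[p]))
      (αcs (n + 1) - (a (n + 1) : ℚ_[p]))
    rw [sub_sub_sub_cancel_right] at h5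
    have h6 := h5.trans (max_le h4.le h3)
    nlinarith
  constructor
  · have h1 := hbig (n + 1)
    rw [Padic.norm_eq_zpow_neg_valuation (hne _)] at h1
    have h2 := (one_lt_zpow_iff_right₀ hp1).1 (lt_of_lt_of_le hp1 h1)
    have h3 : 0 < -(αs (n + 2)).valuation := h2
    omega
  · rw [Padic.norm_eq_zpow_neg_valuation (hnec _)] at hsmall
    have h2 := (zpow_lt_one_iff_right₀ hp1).1 hsmall
    omega
end

section
/- Let p be an odd prime and α ∈ ℚ_p a quadratic irrational with conjugate α^c whose BCF expansion is purely periodic of period N: α_N = α, with partial quotients a_0, …, a_{N−1} repeating. Then α is regular (v_p(α) < 0 and v_p(α^c) > 0), and the BCF expansion of β = −1/α^c is purely periodic with the reversed period: writing (β_j) for the BCF complete quotients of β, one has β_N = β and s(β_j) = a_{N−1−j} for 0 ≤ j ≤ N−1. -/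
/-- if the BCF of `α` is purely periodic of period `N` (`α_N = α`),
then `α` is regular, and the BCF of `β = −1/α^c` is purely periodic with the
reversed period: `β_N = β` and `s(β_j) = a_{N−1−j}` for `0 ≤ j < N`. -/
theorem browkin_purely_periodic_conjugate
    (p : ℕ) [Fact p.Prime] (hp : Odd p)
    (α : ℚ_[p]) (hirr : ∀ q : ℚ, α ≠ (q : ℚ_[p]))
    (tr nm : ℚ) (hquad : α ^ 2 - (tr : ℚ_[p]) * α + (nm : ℚ_[p]) = 0)
    (αc : ℚ_[p]) (hαc : αc = (tr : ℚ_[p]) - α)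
    (αs : ℕ → ℚ_[p]) (a : ℕ → ℚ) (hα0 : αs 0 = α) (hbcf : IsBCF p αs a)
    (αcs : ℕ → ℚ_[p]) (hαc0 : αcs 0 = αc)
    (hαcstep : ∀ n, αcs (n + 1) = (αcs n - (a n : ℚ_[p]))⁻¹)
    (N : ℕ) (hN : 1 ≤ N) (hper : αs N = α) :
    α.valuation < 0 ∧ 0 < αc.valuation ∧
    ∃ βs : ℕ → ℚ_[p], ∃ b : ℕ → ℚ,
      IsBCF p βs b ∧ βs 0 = -αc⁻¹ ∧ βs N = βs 0 ∧
      ∀ j < N, b j = a (N - 1 - j) := by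
  have key : ∀ n, (∀ q : ℚ, αs n ≠ (q : ℚ_[p])) ∧
      ∃ s m : ℚ, αs n + αcs n = (s : ℚ_[p]) ∧ αs n * αcs n = (m : ℚ_[p]) := by
    intro n
    induction n with
    | zero =>
      rw [hα0, hαc0]
      refine ⟨hirr, tr, nm, ?_, ?_⟩
      · rw [hαc]; ring
      · rw [hαc]; linear_combination -hquad
    | succ n ih =>
      obtain ⟨h1, s, m, hs, hm⟩ := ih
      have hc : ∀ q : ℚ, αcs n ≠ (q : ℚ_[p]) := by
        intro q hq
        apply h1 (s - q)
        push_cast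
        rw [← hq, ← hs]; ring
      have e1 : αs n - (a n : ℚ_[p]) ≠ 0 := sub_ne_zero.2 (h1 _)
      have e2 : αcs n - (a n : ℚ_[p]) ≠ 0 := sub_ne_zero.2 (hc _)
      have e3 : ((m - a n * s + a n ^ 2 : ℚ) : ℚ_[p])
          = (αs n - (a n : ℚ_[p])) * (αcs n - (a n : ℚ_[p])) := by
        push_cast
        rw [← hs, ← hm]; ring
      rw [(hbcf n).2.2, hαcstep n]
      refine ⟨?_, (s - 2 * a n) / (m - a n * s + a n ^ 2), 1 / (m - a n * s + a n ^ 2), ?_, ?_⟩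
      · intro q hq
        apply h1 (q⁻¹ + a n)
        push_cast
        rw [← hq, inv_inv]; ring
      · rw [Rat.cast_div, e3]
        push_cast
        rw [← hs]
        field_simp
        ring
      · rw [Rat.cast_div, e3]
        push_cast
        field_simp
  have hcirr : ∀ n, ∀ q : ℚ, αcs n ≠ (q : ℚ_[p]) := by
    intro n q hq
    obtain ⟨h1, s, m, hs, hm⟩ := key n
    apply h1 (s - q)
    push_cast
    rw [← hq, ← hs]; ring
  have hsum : α + αc = (tr : ℚ_[p]) := by rw [hαc]; ring
  -- the conjugate sequence is periodic too
  have hcN : αcs N = αc := by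
    obtain ⟨h1, s, m, hs, hm⟩ := key N
    rw [hper] at hs hm
    have hlin : ((s - tr : ℚ) : ℚ_[p]) * α = ((m - nm : ℚ) : ℚ_[p]) := by
      push_cast
      rw [← hs, ← hm]; linear_combination hquad
    by_cases hst : s - tr = 0
    · have : s = tr := sub_eq_zero.1 hst
      rw [this, ← hsum] at hs
      exact add_left_cancel hs
    · exfalso
      apply hirr ((m - nm) / (s - tr))
      have : ((s - tr : ℚ) : ℚ_[p]) ≠ 0 := by exact_mod_cast hst
      rw [Rat.cast_div, ← hlin]
      field_simp
  have hd : ∀ n, αs n - (a n : ℚ_[p]) ≠ 0 := fun n => sub_ne_zero.2 ((key n).1 _)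
  have hdc : ∀ n, αcs n - (a n : ℚ_[p]) ≠ 0 := fun n => sub_ne_zero.2 (hcirr n _)
  have hbig' : ∀ n, 1 < ‖αs (n + 1)‖ := by
    intro n
    rw [(hbcf n).2.2, norm_inv]
    exact (one_lt_inv₀ (norm_pos_iff.2 (hd n))).2 (hbcf n).2.1
  have hαbig : 1 < ‖α‖ := by
    rw [← hper]
    obtain ⟨k, rfl⟩ : ∃ k, N = k + 1 := ⟨N - 1, by omega⟩
    exact hbig' k
  have hbig : ∀ n, 1 < ‖αs n‖ := by
    intro n
    cases n with
    | zero => rw [hα0]; exact hαbig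
    | succ n => exact hbig' n
  have habig : ∀ n, 1 < ‖(a n : ℚ_[p])‖ := by
    intro n
    by_contra h
    have h := not_lt.1 h
    have h2 := Padic.nonarchimedean (αs n - (a n : ℚ_[p])) (a n : ℚ_[p])
    rw [sub_add_cancel] at h2
    exact absurd (hbig n) (not_lt.2 (h2.trans (max_le (hbcf n).2.1.le h)))
  have hstep : ∀ n, ‖αcs n‖ ≤ 1 → ‖αcs (n + 1)‖ < 1 := by
    intro n hn
    rw [hαcstep n, norm_inv]
    apply inv_lt_one_of_one_lt₀
    by_contra h
    have h := not_lt.1 h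
    have h2 := Padic.nonarchimedean (αcs n) (-(αcs n - (a n : ℚ_[p])))
    rw [norm_neg, show αcs n + -(αcs n - (a n : ℚ_[p])) = (a n : ℚ_[p]) by ring] at h2
    exact absurd (habig n) (not_lt.2 (h2.trans (max_le hn h)))
  have hprop : ∀ n k, ‖αcs n‖ ≤ 1 → ‖αcs (n + k)‖ ≤ 1 := by
    intro n k hn
    induction k with
    | zero => exact hn
    | succ k ih => exact (hstep _ ih).le
  have hex : ∃ n < N, 1 ≤ ‖αcs n - (a n : ℚ_[p])‖ := by
    by_contra hcon
    push Not at hcon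
    have hδ : ∀ n, ‖αs (n + 1) - αcs (n + 1)‖
        = ‖αs n - αcs n‖ * (‖αs (n + 1)‖ * ‖αcs (n + 1)‖) := by
      intro n
      rw [← norm_mul, ← norm_mul, ← norm_neg, (hbcf n).2.2, hαcstep n]
      congr 1
      have := hd n
      have := hdc n
      field_simp
      ring
    have h0 : 0 < ‖αs 0 - αcs 0‖ := by
      rw [norm_pos_iff, hα0, hαc0]
      intro h
      apply hirr (tr / 2)
      push_cast
      rw [← hsum, ← sub_eq_zero.1 h]; ring
    have hgrow : ∀ n, n + 1 ≤ N → ‖αs 0 - αcs 0‖ < ‖αs (n + 1) - αcs (n + 1)‖ := by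
      have hone : ∀ n, n < N → 1 < ‖αs (n + 1)‖ * ‖αcs (n + 1)‖ := by
        intro n hn
        apply one_lt_mul_of_lt_of_le (hbig _)
        rw [hαcstep n, norm_inv]
        exact ((one_lt_inv₀ (norm_pos_iff.2 (hdc n))).2 (hcon n hn)).le
      intro n
      induction n with
      | zero =>
        intro hn
        rw [hδ 0]
        exact lt_mul_of_one_lt_right h0 (hone 0 (by omega))
      | succ n ih =>
        intro hn
        have h1 := ih (by omega)
        rw [hδ (n + 1)]
        exact h1.trans (lt_mul_of_one_lt_right (h0.trans h1) (hone (n + 1) (by omega)))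
    have h1 := hgrow (N - 1) (by omega)
    rw [Nat.sub_add_cancel hN, hper, hcN, hα0, hαc0] at h1
    exact lt_irrefl _ h1
  have hc0 : ‖αcs 0‖ ≤ 1 := by
    obtain ⟨n, hn, h⟩ := hex
    have h1 : ‖αcs (n + 1)‖ ≤ 1 := by
      rw [hαcstep n, norm_inv]
      exact inv_le_one_of_one_le₀ h
    have h2 := hprop (n + 1) (N - (n + 1)) h1
    rw [show n + 1 + (N - (n + 1)) = N by omega, hcN, ← hαc0] at h2
    exact h2
  have hcall : ∀ n, ‖αcs n‖ < 1 := by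
    have hs : ∀ n, ‖αcs (n + 1)‖ < 1 := by
      intro n
      apply hstep
      have := hprop 0 n hc0
      rwa [zero_add] at this
    intro n
    cases n with
    | zero =>
      have := hs (N - 1)
      rwa [Nat.sub_add_cancel hN, hcN, ← hαc0] at this
    | succ n => exact hs n
  have hp1 : (1 : ℝ) < p := by exact_mod_cast (Fact.out : p.Prime).one_lt
  have hα_ne : α ≠ 0 := by simpa using hirr 0
  have hαc_ne : αc ≠ 0 := by
    have := hcirr 0 0
    rw [hαc0] at this
    simpa using this
  refine ⟨?_, ?_, ?_⟩
  · rw [Padic.norm_eq_zpow_neg_valuation hα_ne, one_lt_zpow_iff_right₀ hp1] at hαbig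
    omega
  · have h := hcall 0
    rw [hαc0, Padic.norm_eq_zpow_neg_valuation hαc_ne, zpow_lt_one_iff_right₀ hp1] at h
    omega
  · refine ⟨fun j => -(αcs (N - j % N))⁻¹, fun j => a (N - 1 - j % N), ?_, ?_, ?_, ?_⟩
    · intro j
      have hlt : j % N < N := Nat.mod_lt _ hN
      have hβ : -(αcs (N - j % N))⁻¹ - (a (N - 1 - j % N) : ℚ_[p])
          = -αcs (N - 1 - j % N) := by
        rw [show N - j % N = (N - 1 - j % N) + 1 by omega, hαcstep, inv_inv]
        ring
      refine ⟨(hbcf _).1, ?_, ?_⟩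
      · show ‖-(αcs (N - j % N))⁻¹ - (a (N - 1 - j % N) : ℚ_[p])‖ < 1
        rw [hβ, norm_neg]
        exact hcall _
      · show -(αcs (N - (j + 1) % N))⁻¹
          = (-(αcs (N - j % N))⁻¹ - (a (N - 1 - j % N) : ℚ_[p]))⁻¹
        rw [hβ, inv_neg]
        congr 2
        rcases Nat.lt_or_ge (j % N + 1) N with h | h
        · have h1 : (j + 1) % N = j % N + 1 := by
            rw [← Nat.mod_add_mod, Nat.mod_eq_of_lt h]
          rw [h1]
          congr 1
          omega
        · have h2 : j % N + 1 = N := by omega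
          have h1 : (j + 1) % N = 0 := by
            rw [← Nat.mod_add_mod, h2, Nat.mod_self]
          rw [h1, Nat.sub_zero, hcN, ← hαc0]
          congr 1
          omega
    · show -(αcs (N - 0 % N))⁻¹ = -αc⁻¹
      rw [Nat.zero_mod, Nat.sub_zero, hcN]
    · show -(αcs (N - N % N))⁻¹ = -(αcs (N - 0 % N))⁻¹
      rw [Nat.mod_self, Nat.zero_mod]
    · intro j hj
      show a (N - 1 - j % N) = a (N - 1 - j)
      rw [Nat.mod_eq_of_lt hj]
end

section
/- Let p be an odd prime and α ∈ ℚ_p a quadratic irrational with conjugate α^c whose BCF expansion is (eventually) periodic, i.e., there exist m ≥ 0 and N ≥ 1 with α_{m+N} = α_m. Then the expansion is purely periodic (there exists N ≥ 1 with α_N = α) if and only if α is regular, i.e., v_p(α) < 0 and v_p(α^c) > 0. -/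
lemma bcf_digit_unique (p : ℕ) [Fact p.Prime] (a b : ℚ) (ha : IsBrowkinDigit p a)
    (hb : IsBrowkinDigit p b) (h : ‖(a : ℚ_[p]) - (b : ℚ_[p])‖ < 1) : a = b := by
  have hp0 : (0 : ℚ) < p := by exact_mod_cast (Fact.out : p.Prime).pos
  obtain ⟨⟨z, i, hz⟩, ha1, ha2⟩ := ha
  obtain ⟨⟨w, j, hw⟩, hb1, hb2⟩ := hb
  have hpp : (0 : ℝ) < p := by exact_mod_cast (Fact.out : p.Prime).pos
  have key : (a - b) * (p : ℚ) ^ (i + j) = ((z * p ^ j - w * p ^ i : ℤ) : ℚ) := by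
    rw [hz, hw]; push_cast; field_simp; ring
  set u : ℤ := z * p ^ j - w * p ^ i with hu
  have key' : ((a : ℚ_[p]) - b) * (p : ℚ_[p]) ^ (i + j) = (u : ℚ_[p]) := by
    exact_mod_cast congrArg (fun q : ℚ => (q : ℚ_[p])) key
  have hn : ‖(u : ℚ_[p])‖ < (p : ℝ) ^ (-((i + j + 1 : ℕ) : ℤ) + 1) := by
    rw [← key', norm_mul, norm_pow, Padic.norm_p]
    have : (p : ℝ) ^ (-((i + j + 1 : ℕ) : ℤ) + 1) = ((p : ℝ)⁻¹) ^ (i + j) := by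
      rw [show -((i + j + 1 : ℕ) : ℤ) + 1 = -((i + j : ℕ) : ℤ) by push_cast; ring, zpow_neg,
        zpow_natCast, inv_pow]
    rw [this]
    have h2 : 0 < ((p : ℝ)⁻¹) ^ (i + j) := by positivity
    nlinarith
  rw [← Padic.norm_le_pow_iff_norm_lt_pow_add_one, Padic.norm_int_le_pow_iff_dvd] at hn
  obtain ⟨k, hk⟩ := hn
  have hab : a - b = p * k := by
    have h3 : (p : ℚ) ^ (i + j) ≠ 0 := by positivity
    apply mul_right_cancel₀ h3
    rw [key, hk]; push_cast; ring
  have hk1 : (k : ℚ) < 1 := by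
    by_contra hc; push Not at hc; nlinarith
  have hk2 : (-1 : ℚ) < k := by
    by_contra hc; push Not at hc; nlinarith
  have hk0 : k = 0 := by
    have h1 : k < 1 := by exact_mod_cast hk1
    have h2 : -1 < k := by exact_mod_cast hk2
    omega
  rw [hk0] at hab
  simp at hab
  linarith

lemma bcf_val_pos (p : ℕ) [Fact p.Prime] (x : ℚ_[p]) (hx : x ≠ 0) :
    0 < x.valuation ↔ ‖x‖ < 1 := by
  have h1 : (1 : ℝ) < p := by exact_mod_cast (Fact.out : p.Prime).one_lt
  rw [Padic.norm_eq_zpow_neg_valuation hx, zpow_lt_one_iff_right₀ h1]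
  omega

lemma bcf_val_neg (p : ℕ) [Fact p.Prime] (x : ℚ_[p]) (hx : x ≠ 0) :
    x.valuation < 0 ↔ 1 < ‖x‖ := by
  have h1 : (1 : ℝ) < p := by exact_mod_cast (Fact.out : p.Prime).one_lt
  rw [Padic.norm_eq_zpow_neg_valuation hx, one_lt_zpow_iff_right₀ h1]
  omega

/-- norm of a difference with a dominating term -/
lemma bcf_norm_dom (p : ℕ) [Fact p.Prime] (x y : ℚ_[p]) (h : ‖x‖ < ‖y‖) : ‖x - y‖ = ‖y‖ := by
  rw [sub_eq_add_neg, Padic.add_eq_max_of_ne (by rw [norm_neg]; exact h.ne), norm_neg]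
  exact max_eq_right h.le

lemma bcf_norm_sub (p : ℕ) [Fact p.Prime] (x y : ℚ_[p]) : ‖x - y‖ ≤ max ‖x‖ ‖y‖ := by
  rw [sub_eq_add_neg, ← norm_neg y]
  exact Padic.nonarchimedean _ _

/-- Galois-type theorem: if the BCF of a quadratic irrational `α`
is eventually periodic, then it is purely periodic iff `α` is regular, i.e.
`v_p(α) < 0` and `v_p(α^c) > 0`. -/
theorem browkin_purely_periodic_iff_regular
    (p : ℕ) [Fact p.Prime] (hp : Odd p)
    (α : ℚ_[p]) (hirr : ∀ q : ℚ, α ≠ (q : ℚ_[p]))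
    (tr nm : ℚ) (hquad : α ^ 2 - (tr : ℚ_[p]) * α + (nm : ℚ_[p]) = 0)
    (αc : ℚ_[p]) (hαc : αc = (tr : ℚ_[p]) - α)
    (αs : ℕ → ℚ_[p]) (a : ℕ → ℚ) (hα0 : αs 0 = α) (hbcf : IsBCF p αs a)
    (αcs : ℕ → ℚ_[p]) (hαc0 : αcs 0 = αc)
    (hαcstep : ∀ n, αcs (n + 1) = (αcs n - (a n : ℚ_[p]))⁻¹)
    (hper : ∃ m N : ℕ, 1 ≤ N ∧ αs (m + N) = αs m) :
    (∃ N : ℕ, 1 ≤ N ∧ αs N = αs 0) ↔ (α.valuation < 0 ∧ 0 < αc.valuation) := by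
  have inv : ∀ n, (∀ q : ℚ, αs n ≠ (q : ℚ_[p])) ∧
      ∃ t q : ℚ, αs n + αcs n = (t : ℚ_[p]) ∧ αs n * αcs n = (q : ℚ_[p]) := by
    intro n
    induction n with
    | zero =>
      refine ⟨by rw [hα0]; exact hirr, tr, nm, ?_, ?_⟩
      · rw [hα0, hαc0, hαc]; ring
      · rw [hα0, hαc0, hαc]; linear_combination -hquad
    | succ n ih =>
      obtain ⟨hi, t, q, ht, hq⟩ := ih
      have hx : αs n - (a n : ℚ_[p]) ≠ 0 := sub_ne_zero.2 (hi _)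
      have hy : αcs n - (a n : ℚ_[p]) ≠ 0 := by
        intro h
        apply hi (t - a n)
        push_cast
        linear_combination ht - h
      refine ⟨?_, (t - 2 * a n) / (q - a n * t + a n ^ 2), 1 / (q - a n * t + a n ^ 2), ?_, ?_⟩
      · intro r hr
        rw [(hbcf n).2.2] at hr
        apply hi (r⁻¹ + a n)
        push_cast
        rw [← hr, inv_inv]; ring
      · rw [(hbcf n).2.2, hαcstep]
        push_cast
        rw [← ht, ← hq, show αs n * αcs n - (a n : ℚ_[p]) * (αs n + αcs n) + (a n : ℚ_[p]) ^ 2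
          = (αs n - a n) * (αcs n - a n) by ring]
        field_simp
        ring
      · rw [(hbcf n).2.2, hαcstep]
        push_cast
        rw [← ht, ← hq, show αs n * αcs n - (a n : ℚ_[p]) * (αs n + αcs n) + (a n : ℚ_[p]) ^ 2
          = (αs n - a n) * (αcs n - a n) by ring]
        field_simp
  have hx : ∀ n, αs n - (a n : ℚ_[p]) ≠ 0 := fun n => sub_ne_zero.2 ((inv n).1 _)
  have hy : ∀ n, αcs n - (a n : ℚ_[p]) ≠ 0 := by
    intro n h
    obtain ⟨hi, t, q, ht, hq⟩ := inv n
    apply hi (t - a n)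
    push_cast
    linear_combination ht - h
  have conj : ∀ n m, αs n = αs m → αcs n = αcs m := by
    intro n m h
    obtain ⟨hi, t, q, ht, hq⟩ := inv n
    obtain ⟨-, t', q', ht', hq'⟩ := inv m
    rw [← h] at ht' hq'
    have e : ((t - t' : ℚ) : ℚ_[p]) * αs n = ((q - q' : ℚ) : ℚ_[p]) := by
      push_cast
      rw [← ht, ← ht', ← hq, ← hq']; ring
    by_cases htt : t - t' = 0
    · have : t = t' := by linarith
      rw [← this] at ht'
      linear_combination ht - ht'
    · exfalso
      have h0 : ((t - t' : ℚ) : ℚ_[p]) ≠ 0 := by exact_mod_cast htt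
      apply hi ((q - q') / (t - t'))
      rw [Rat.cast_div, eq_div_iff h0, ← e]; ring
  have big : ∀ n, 1 < ‖αs (n + 1)‖ := by
    intro n
    rw [(hbcf n).2.2, norm_inv]
    exact (one_lt_inv₀ (norm_pos_iff.2 (hx n))).2 (hbcf n).2.1
  have abig : ∀ n, 1 < ‖αs n‖ → 1 < ‖(a n : ℚ_[p])‖ := by
    intro n h
    have h1 := bcf_norm_dom p (αs n - a n) (αs n) ((hbcf n).2.1.trans h)
    rw [show αs n - (a n : ℚ_[p]) - αs n = -(a n : ℚ_[p]) by ring, norm_neg] at h1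
    rwa [h1]
  have csmall : ∀ n, 1 < ‖αs n‖ → ‖αcs n‖ < 1 → ‖αcs (n + 1)‖ < 1 := by
    intro n h hc
    have h1 := abig n h
    rw [hαcstep, norm_inv, bcf_norm_dom p _ _ (hc.trans h1)]
    exact inv_lt_one_of_one_lt₀ h1
  have fwd : ∀ n m, αs n = αs m → αs (n + 1) = αs (m + 1) := by
    intro n m h
    have : a n = a m := by
      apply bcf_digit_unique p _ _ (hbcf n).1 (hbcf m).1
      have h1 := (hbcf n).2.1
      have h2 := (hbcf m).2.1
      rw [h] at h1
      rw [show (a n : ℚ_[p]) - a m = (αs m - a m) - (αs m - a n) by ring]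
      exact (bcf_norm_sub p _ _).trans_lt (max_lt h2 h1)
    rw [(hbcf n).2.2, (hbcf m).2.2, h, this]
  have hα_ne : α ≠ 0 := by simpa using hirr 0
  have hαc_ne : αc ≠ 0 := by
    intro h
    apply hirr tr
    linear_combination hαc - h
  rw [bcf_val_neg p _ hα_ne, bcf_val_pos p _ hαc_ne]
  constructor
  · rintro ⟨N, hN, hNe⟩
    have h0 : 1 < ‖αs 0‖ := by
      obtain ⟨k, rfl⟩ : ∃ k, N = k + 1 := ⟨N - 1, by omega⟩
      rw [← hNe]; exact big k
    have all : ∀ n, 1 < ‖αs n‖ := by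
      intro n
      cases n with
      | zero => exact h0
      | succ n => exact big n
    refine ⟨hα0 ▸ h0, ?_⟩
    have per : ∀ n, αs (n + N) = αs n := by
      intro n
      induction n with
      | zero => simpa using hNe
      | succ n ih =>
        have := fwd _ _ ih
        rwa [show n + 1 + N = n + N + 1 by ring]
    have perk : ∀ k, αs (k * N) = αs 0 := by
      intro k
      induction k with
      | zero => simp
      | succ k ih => rw [show (k + 1) * N = k * N + N by ring, per, ih]
    have hex : ∃ n, ‖αcs n‖ < 1 := by
      by_contra hcon
      push Not at hcon
      have dne : αs 0 - αcs 0 ≠ 0 := by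
        intro h
        apply hirr (tr / 2)
        rw [hα0, hαc0, hαc] at h
        push_cast
        linear_combination h / 2
      have dstep : ∀ n, ‖αs (n + 1) - αcs (n + 1)‖ =
          ‖αs (n + 1)‖ * ‖αcs (n + 1)‖ * ‖αs n - αcs n‖ := by
        intro n
        rw [← norm_mul, ← norm_mul, ← norm_neg, (hbcf n).2.2, hαcstep]
        congr 1
        have := hx n
        have := hy n
        field_simp
        ring
      have grow : ∀ n, 0 < ‖αs n - αcs n‖ ∧ ‖αs n - αcs n‖ < ‖αs (n + 1) - αcs (n + 1)‖ := by
        have st : ∀ n, 0 < ‖αs n - αcs n‖ →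
            ‖αs n - αcs n‖ < ‖αs (n + 1) - αcs (n + 1)‖ := by
          intro n hpos
          rw [dstep]
          have : 1 < ‖αs (n + 1)‖ * ‖αcs (n + 1)‖ := by
            nlinarith [big n, hcon (n + 1)]
          nlinarith
        intro n
        induction n with
        | zero => exact ⟨norm_pos_iff.2 dne, st 0 (norm_pos_iff.2 dne)⟩
        | succ n ih => exact ⟨ih.1.trans ih.2, st _ (ih.1.trans ih.2)⟩
      have mono : StrictMono (fun n => ‖αs n - αcs n‖) := strictMono_nat_of_lt_succ fun n => (grow n).2
      have hlt : ‖αs 0 - αcs 0‖ < ‖αs N - αcs N‖ := mono (show 0 < N by omega)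
      rw [hNe, conj _ _ hNe] at hlt
      exact lt_irrefl _ hlt
    obtain ⟨n, hn⟩ := hex
    have later : ∀ k, ‖αcs (n + k)‖ < 1 := by
      intro k
      induction k with
      | zero => exact hn
      | succ k ih => exact csmall _ (all _) ih
    have hle : n ≤ n * N := Nat.le_mul_of_pos_right n (by omega)
    have := later (n * N - n)
    rw [Nat.add_sub_cancel' hle, conj _ _ (perk n), hαc0] at this
    exact this
  · rintro ⟨h1, h2⟩
    have reg : ∀ n, 1 < ‖αs n‖ ∧ ‖αcs n‖ < 1 := by
      intro n
      induction n with
      | zero => rw [hα0, hαc0]; exact ⟨h1, h2⟩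
      | succ n ih => exact ⟨big n, csmall n ih.1 ih.2⟩
    have back : ∀ n m, αs (n + 1) = αs (m + 1) → αs n = αs m := by
      intro n m h
      have hc := conj _ _ h
      rw [hαcstep, hαcstep, inv_inj] at hc
      have haa : a n = a m := by
        apply bcf_digit_unique p _ _ (hbcf n).1 (hbcf m).1
        rw [show (a n : ℚ_[p]) - a m = αcs n - αcs m by linear_combination -hc]
        exact (bcf_norm_sub p _ _).trans_lt (max_lt (reg n).2 (reg m).2)
      rw [(hbcf n).2.2, (hbcf m).2.2, inv_inj, haa] at h
      exact sub_left_injective h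
    obtain ⟨m, N, hN, hm⟩ := hper
    refine ⟨N, hN, ?_⟩
    induction m with
    | zero => simpa using hm
    | succ m ih =>
      apply ih
      apply back
      rwa [show m + N + 1 = m + 1 + N by ring]
end

section
/- Let p be an odd prime and α ∈ ℚ_p a quadratic irrational with conjugate α^c whose BCF expansion is purely periodic of period N: α_N = α, with partial quotients a_0, …, a_{N−1} repeating. Then the period is palindromic, i.e., a_j = a_{N−1−j} for all 0 ≤ j ≤ N−1, if and only if the norm of α is −1, i.e., α·α^c = −1. -/
/-- Two orbits under the same partial quotients separate strictly. -/
lemma bcf_expand {p : ℕ} [Fact p.Prime] (x y b : ℕ → ℚ_[p]) (N : ℕ) (hN : 1 ≤ N)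
    (hx : ∀ j < N, x (j + 1) = (x j - b j)⁻¹) (hy : ∀ j < N, y (j + 1) = (y j - b j)⁻¹)
    (hx1 : ∀ j < N, 1 < ‖x (j + 1)‖) (hy1 : ∀ j < N, 1 ≤ ‖y (j + 1)‖)
    (h : x N - y N = x 0 - y 0) : x 0 = y 0 := by
  by_contra hne
  have h0 : 0 < ‖x 0 - y 0‖ := norm_pos_iff.2 (sub_ne_zero.2 hne)
  have step : ∀ j < N, ‖x (j + 1) - y (j + 1)‖ = ‖x j - y j‖ * ‖x (j + 1)‖ * ‖y (j + 1)‖ := by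
    intro j hj
    have e1 : x (j + 1) ≠ 0 := norm_pos_iff.1 (by linarith [hx1 j hj])
    have e2 : y (j + 1) ≠ 0 := norm_pos_iff.1 (by linarith [hy1 j hj])
    rw [← norm_mul, ← norm_mul, ← norm_neg]
    congr 1
    have f1 : x j - b j = (x (j + 1))⁻¹ := by rw [hx j hj, inv_inv]
    have f2 : y j - b j = (y (j + 1))⁻¹ := by rw [hy j hj, inv_inv]
    have : x j - y j = (x (j + 1))⁻¹ - (y (j + 1))⁻¹ := by rw [← f1, ← f2]; ring
    rw [this]; field_simp; ring
  have key : ∀ j, j < N → ‖x 0 - y 0‖ < ‖x (j + 1) - y (j + 1)‖ := by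
    have gr : ∀ j < N, 0 < ‖x j - y j‖ → ‖x j - y j‖ < ‖x (j + 1) - y (j + 1)‖ := by
      intro j hj hpos
      rw [step j hj]
      have h1 := hx1 j hj
      have h2 := hy1 j hj
      have h3 : ‖x j - y j‖ < ‖x j - y j‖ * ‖x (j + 1)‖ := lt_mul_of_one_lt_right hpos h1
      exact lt_of_lt_of_le h3 (le_mul_of_one_le_right (by positivity) h2)
    intro j
    induction j with
    | zero => intro hj; exact gr 0 hj h0
    | succ k ih =>
      intro hj
      have := ih (by omega)
      exact this.trans (gr (k + 1) hj (h0.trans this))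
  have := key (N - 1) (by omega)
  rw [Nat.sub_add_cancel hN, h] at this
  exact lt_irrefl _ this

lemma bcf_digit_unique_s8 {p : ℕ} [Fact p.Prime] (y z : ℚ) (hy : IsBrowkinDigit p y)
    (hz : IsBrowkinDigit p z) (h : ‖(y : ℚ_[p]) - (z : ℚ_[p])‖ < 1) : y = z := by
  obtain ⟨⟨u, i, hu⟩, hy1, hy2⟩ := hy
  obtain ⟨⟨v, j, hv⟩, hz1, hz2⟩ := hz
  have hp0 : (0 : ℚ) < p := by exact_mod_cast (Fact.out : p.Prime).pos
  have hpK : (p : ℚ_[p]) ≠ 0 := by exact_mod_cast (Fact.out : p.Prime).ne_zero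
  set w : ℤ := u * p ^ j - v * p ^ i with hw
  have hyz : (y - z) * (p : ℚ) ^ (i + j) = w := by
    rw [hu, hv, hw]; push_cast; field_simp; ring
  have hyzK : ((y : ℚ_[p]) - z) * (p : ℚ_[p]) ^ (i + j) = (w : ℚ_[p]) := by
    have := congrArg (fun q : ℚ => (q : ℚ_[p])) hyz
    push_cast at this
    exact this
  have hpR : (0 : ℝ) < p := by exact_mod_cast (Fact.out : p.Prime).pos
  have hwn : ‖(w : ℚ_[p])‖ < (p : ℝ) ^ (-((i + j : ℕ) : ℤ)) := by
    rw [← hyzK, norm_mul, Padic.norm_p_pow]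
    exact mul_lt_of_lt_one_left (by positivity) h
  have hdvd : (p : ℤ) ^ (i + j + 1) ∣ w := by
    have h2 := (Padic.norm_le_pow_iff_norm_lt_pow_add_one (w : ℚ_[p]) (-((i + j + 1 : ℕ) : ℤ))).2
      (by convert hwn using 2; push_cast; ring)
    have := (Padic.norm_int_le_pow_iff_dvd (p := p) w (i + j + 1)).1 h2
    exact_mod_cast this
  obtain ⟨m, hm⟩ := hdvd
  have e : y - z = p * m := by
    have : (y - z) * (p : ℚ) ^ (i + j) = (p * m) * (p : ℚ) ^ (i + j) := by
      rw [hyz, hm]; push_cast; ring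
    exact mul_right_cancel₀ (by positivity) this
  have m1 : (m : ℚ) < 1 := by
    by_contra hc; push Not at hc
    nlinarith
  have m2 : (-1 : ℚ) < m := by
    by_contra hc; push Not at hc
    nlinarith
  have m3 : m < 1 := by exact_mod_cast m1
  have m4 : -1 < m := by exact_mod_cast m2
  have m0 : m = 0 := by omega
  rw [m0] at e
  simp at e
  linarith

/-- if the BCF of `α` is purely periodic of period `N` (`α_N = α`),
then the period is palindromic (`a_j = a_{N−1−j}` for `0 ≤ j < N`) iff the norm
of `α` is `−1`, i.e. `α·α^c = −1`. -/
theorem browkin_palindromic_iff_norm_neg_one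
    (p : ℕ) [Fact p.Prime] (hp : Odd p)
    (α : ℚ_[p]) (hirr : ∀ q : ℚ, α ≠ (q : ℚ_[p]))
    (tr nm : ℚ) (hquad : α ^ 2 - (tr : ℚ_[p]) * α + (nm : ℚ_[p]) = 0)
    (αc : ℚ_[p]) (hαc : αc = (tr : ℚ_[p]) - α)
    (αs : ℕ → ℚ_[p]) (a : ℕ → ℚ) (hα0 : αs 0 = α) (hbcf : IsBCF p αs a)
    (αcs : ℕ → ℚ_[p]) (hαc0 : αcs 0 = αc)
    (hαcstep : ∀ n, αcs (n + 1) = (αcs n - (a n : ℚ_[p]))⁻¹)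
    (N : ℕ) (hN : 1 ≤ N) (hper : αs N = α) :
    (∀ j < N, a j = a (N - 1 - j)) ↔ α * αc = -1 := by
  have hstep : ∀ n, αs (n + 1) = (αs n - (a n : ℚ_[p]))⁻¹ := fun n => (hbcf n).2.2
  -- rational traces and norms, irrationality
  have hrat : ∀ n, (∀ q : ℚ, αs n ≠ (q : ℚ_[p])) ∧ (∀ q : ℚ, αcs n ≠ (q : ℚ_[p])) ∧
      ∃ t m : ℚ, αs n + αcs n = (t : ℚ_[p]) ∧ αs n * αcs n = (m : ℚ_[p]) := by
    intro n
    induction n with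
    | zero =>
      rw [hα0, hαc0]
      refine ⟨hirr, ?_, tr, nm, ?_, ?_⟩
      · intro q hq
        apply hirr (tr - q)
        push_cast
        rw [← hq, hαc]; ring
      · rw [hαc]; ring
      · rw [hαc]; linear_combination -hquad
    | succ n ih =>
      obtain ⟨h1, h2, t, m, ht, hm⟩ := ih
      have n1 : αs n - (a n : ℚ_[p]) ≠ 0 := sub_ne_zero.2 (h1 _)
      have n2 : αcs n - (a n : ℚ_[p]) ≠ 0 := sub_ne_zero.2 (h2 _)
      have hprod : (αs n - (a n : ℚ_[p])) * (αcs n - (a n : ℚ_[p])) =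
          ((m - a n * t + a n ^ 2 : ℚ) : ℚ_[p]) := by
        push_cast; rw [← ht, ← hm]; ring
      rw [hstep, hαcstep]
      refine ⟨?_, ?_, (t - 2 * a n) / (m - a n * t + a n ^ 2), (m - a n * t + a n ^ 2)⁻¹, ?_, ?_⟩
      · intro q hq
        apply h1 (a n + q⁻¹)
        push_cast
        rw [← hq, inv_inv]; ring
      · intro q hq
        apply h2 (a n + q⁻¹)
        push_cast
        rw [← hq, inv_inv]; ring
      · rw [Rat.cast_div, ← hprod]
        push_cast
        rw [← ht]
        field_simp
        ring
      · rw [Rat.cast_inv, ← hprod, mul_inv]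
  have hcne : ∀ n, αcs n ≠ 0 := fun n => by simpa using (hrat n).2.1 0
  -- the conjugate sequence is periodic
  have hcper : αcs N = αc := by
    obtain ⟨-, -, t, m, ht, hm⟩ := hrat N
    rw [hper] at ht hm
    have hc : αcs N = t - α := by rw [← ht]; ring
    have e : α * ((t - tr : ℚ) : ℚ_[p]) = ((m - nm : ℚ) : ℚ_[p]) := by
      push_cast; rw [hc] at hm; linear_combination hm + hquad
    have htt : t - tr = 0 := by
      by_contra hne
      apply hirr ((m - nm) / (t - tr))
      rw [Rat.cast_div, ← e, mul_div_cancel_right₀]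
      exact_mod_cast hne
    rw [hc, hαc, sub_eq_zero.1 htt]
  have hne : α ≠ αc := by
    intro h
    apply hirr (tr / 2)
    push_cast
    rw [hαc] at h
    linear_combination h / 2
  -- norms
  have hs1 : ∀ n, 1 < ‖αs (n + 1)‖ := by
    intro n
    rw [hstep, norm_inv]
    exact (one_lt_inv₀ (norm_pos_iff.2 (sub_ne_zero.2 ((hrat n).1 _)))).2 (hbcf n).2.1
  have hs : ∀ n, 1 < ‖αs n‖ := by
    intro n
    cases n with
    | zero =>
      have := hs1 (N - 1)
      rw [Nat.sub_add_cancel hN, hper, ← hα0] at this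
      exact this
    | succ n => exact hs1 n
  have ha : ∀ n, 1 < ‖(a n : ℚ_[p])‖ := by
    intro n
    by_contra hc
    push Not at hc
    have h1 := Padic.nonarchimedean (αs n - (a n : ℚ_[p])) (a n : ℚ_[p])
    rw [sub_add_cancel] at h1
    have := max_le (hbcf n).2.1.le hc
    linarith [hs n]
  have hcstep1 : ∀ n, ‖αcs n‖ < 1 → ‖αcs (n + 1)‖ < 1 := by
    intro n hn
    rw [hαcstep, norm_inv]
    apply inv_lt_one_of_one_lt₀
    by_contra hc
    push Not at hc
    have h1 := Padic.nonarchimedean (αcs n) (-(αcs n - (a n : ℚ_[p])))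
    rw [norm_neg] at h1
    have h2 := max_le hn.le hc
    have h3 : αcs n + -(αcs n - (a n : ℚ_[p])) = a n := by ring
    rw [h3] at h1
    linarith [ha n]
  have hcmono : ∀ m k, ‖αcs m‖ < 1 → ‖αcs (m + k)‖ < 1 := by
    intro m k hm
    induction k with
    | zero => exact hm
    | succ k ih => exact hcstep1 _ ih
  have hcN : ‖αcs N‖ < 1 := by
    by_contra hc
    apply hne
    rw [← hα0, ← hαc0]
    refine bcf_expand αs αcs (fun n => (a n : ℚ_[p])) N hN (fun j _ => hstep j)
      (fun j _ => hαcstep j) (fun j _ => hs1 j) ?_ (by rw [hper, hcper, hα0, hαc0])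
    intro j hj
    by_contra hlt
    push Not at hlt
    apply hc
    have := hcmono (j + 1) (N - (j + 1)) hlt
    rwa [Nat.add_sub_cancel' (by omega)] at this
  have hc : ∀ n, ‖αcs n‖ < 1 := by
    intro n
    have h0 : ‖αcs 0‖ < 1 := by rw [hαc0, ← hcper]; exact hcN
    simpa using hcmono 0 n h0
  -- the reversed sequence
  set g : ℕ → ℚ_[p] := fun j => -(αcs (N - j))⁻¹ with hg
  have hg1 : ∀ j, 1 < ‖g j‖ := by
    intro j
    rw [hg]
    simp only [norm_neg, norm_inv]
    exact (one_lt_inv₀ (norm_pos_iff.2 (hcne _))).2 (hc _)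
  have hgsub : ∀ j < N, g j - (a (N - 1 - j) : ℚ_[p]) = -αcs (N - 1 - j) := by
    intro j hj
    have e : N - j = (N - 1 - j) + 1 := by omega
    simp only [hg]
    rw [e, hαcstep, inv_inv]; ring
  have hgstep : ∀ j < N, g (j + 1) = (g j - (a (N - 1 - j) : ℚ_[p]))⁻¹ := by
    intro j hj
    rw [hgsub j hj, inv_neg]
    simp only [hg]
    rw [show N - (j + 1) = N - 1 - j by omega]
  have hg0 : g 0 = -αc⁻¹ := by simp only [hg]; rw [Nat.sub_zero, hcper]
  have hgN : g N = -αc⁻¹ := by simp only [hg]; rw [Nat.sub_self, hαc0]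
  have hαcne : αc ≠ 0 := hαc0 ▸ hcne 0
  constructor
  · intro hpal
    have := bcf_expand αs g (fun n => (a n : ℚ_[p])) N hN (fun j _ => hstep j)
      (fun j hj => by rw [hgstep j hj, ← hpal j hj]) (fun j _ => hs1 j)
      (fun j _ => (hg1 _).le) (by rw [hper, hgN, hα0, hg0])
    rw [hα0, hg0] at this
    rw [this]
    field_simp
  · intro hnorm
    have hdig : ∀ j < N, g j = αs j → a j = a (N - 1 - j) := by
      intro j hj he
      apply bcf_digit_unique_s8 (p := p) _ _ (hbcf j).1 (hbcf _).1
      have h1 := hgsub j hj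
      have h2 := Padic.nonarchimedean (-(αs j - (a j : ℚ_[p])))
        (g j - (a (N - 1 - j) : ℚ_[p]))
      have h3 : -(αs j - (a j : ℚ_[p])) + (g j - (a (N - 1 - j) : ℚ_[p])) =
        (a j : ℚ_[p]) - (a (N - 1 - j) : ℚ_[p]) := by rw [he]; ring
      rw [h3] at h2
      refine lt_of_le_of_lt h2 (max_lt ?_ ?_)
      · rw [norm_neg]; exact (hbcf j).2.1
      · rw [h1, norm_neg]; exact hc _
    have heq : ∀ j, j ≤ N → g j = αs j := by
      intro j
      induction j with
      | zero =>
        intro _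
        rw [hg0, hα0]
        field_simp
        linear_combination -hnorm
      | succ j ih =>
        intro hj
        have h := ih (by omega)
        rw [hgstep j (by omega), hstep, ← hdig j (by omega) h, h]
    intro j hj
    exact hdig j hj (heq j hj.le)
end

section
/- Let p be an odd prime and α ∈ ℚ_p a quadratic irrational whose BCF complete quotients admit a representation α_n = (b_n + δ)/(p^{k_n} c_n) with b_n, c_n, k_n ∈ ℤ, c_n ≠ 0, p ∤ c_n, where δ ∈ ℚ_p and δ² = Δ is a non-square integer. If there exists a strictly increasing sequence of indices (t_n) with b_{t_n}² < Δ for all n (i.e., the real embeddings of α_{t_n} have negative norm), then the BCF expansion of α is periodic: there exist m ≥ 0 and N ≥ 1 with α_{m+N} = α_m. -/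
/-- if there is a strictly increasing sequence of indices `t_n`
with `b_{t_n}² < Δ` (negative norm of the real embeddings), then the BCF
expansion of `α` is periodic. -/
theorem browkin_periodic_of_negative_norms
    (p : ℕ) [Fact p.Prime] (hp : Odd p)
    (α : ℚ_[p]) (hirr : ∀ q : ℚ, α ≠ (q : ℚ_[p]))
    (αs : ℕ → ℚ_[p]) (a : ℕ → ℚ) (hα0 : αs 0 = α) (hbcf : IsBCF p αs a)
    (δ : ℚ_[p]) (Δ : ℤ) (hδ : δ ^ 2 = (Δ : ℚ_[p])) (hΔ : ¬IsSquare Δ)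
    (b c : ℕ → ℤ) (kk : ℕ → ℤ)
    (hrep : ∀ n, c n ≠ 0 ∧ ¬((p : ℤ) ∣ c n) ∧
      αs n = ((b n : ℚ_[p]) + δ) / ((p : ℚ_[p]) ^ (kk n) * (c n : ℚ_[p])))
    (hneg : ∃ f : ℕ → ℕ, StrictMono f ∧ ∀ n : ℕ, (b (f n)) ^ 2 < Δ) :
    ∃ m N : ℕ, 1 ≤ N ∧ αs (m + N) = αs m := by
  have hprime : p.Prime := Fact.out
  have hp2 : 2 ≤ p := hprime.two_le
  have hpQ : (p : ℚ) ≠ 0 := by exact_mod_cast hprime.ne_zero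
  have hpp : (p : ℚ_[p]) ≠ 0 := by exact_mod_cast hprime.ne_zero
  -- δ is not rational
  have hδirr : ∀ q : ℚ, δ ≠ (q : ℚ_[p]) := by
    intro q hq
    apply hΔ
    rw [← Rat.isSquare_intCast_iff]
    refine ⟨q, ?_⟩
    rw [hq] at hδ
    have : ((q ^ 2 : ℚ) : ℚ_[p]) = ((Δ : ℚ) : ℚ_[p]) := by push_cast; exact hδ
    have h2 : q ^ 2 = (Δ : ℚ) := by exact_mod_cast this
    rw [← h2, sq]
  have hlin : ∀ x y : ℚ, (x : ℚ_[p]) + δ * (y : ℚ_[p]) = 0 → x = 0 ∧ y = 0 := by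
    intro x y h
    have hy : y = 0 := by
      by_contra hy
      have hy' : (y : ℚ_[p]) ≠ 0 := by exact_mod_cast hy
      apply hδirr (-x / y)
      push_cast
      field_simp
      linear_combination h
    subst hy
    refine ⟨?_, rfl⟩
    simpa using h
  have hc : ∀ n, (c n : ℚ_[p]) ≠ 0 := fun n => by exact_mod_cast (hrep n).1
  let Q : ℕ → ℚ := fun n => (p : ℚ) ^ (kk n) * (c n : ℚ)
  have hQ : ∀ n, (Q n : ℚ_[p]) = (p : ℚ_[p]) ^ (kk n) * (c n : ℚ_[p]) := by
    intro n; simp [Q]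
  have hQ0 : ∀ n, (Q n : ℚ_[p]) ≠ 0 := by
    intro n; rw [hQ]; exact mul_ne_zero (zpow_ne_zero _ hpp) (hc n)
  have hα : ∀ n, αs n * (Q n : ℚ_[p]) = (b n : ℚ_[p]) + δ := by
    intro n
    have h := (hrep n).2.2
    rw [← hQ] at h
    rw [h, div_mul_cancel₀ _ (hQ0 n)]
  have hne : ∀ n, αs n - (a n : ℚ_[p]) ≠ 0 := by
    intro n h
    have h1 := hα n
    rw [sub_eq_zero.mp h] at h1
    apply hδirr (a n * Q n - b n)
    push_cast
    linear_combination -h1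
  have hmul : ∀ n, αs (n+1) * (αs n - (a n : ℚ_[p])) = 1 := by
    intro n
    rw [(hbcf n).2.2, inv_mul_cancel₀ (hne n)]
  have hprod : ∀ n, Q n * Q (n+1) = (Δ : ℚ) - (b (n+1) : ℚ) ^ 2 := by
    intro n
    have h1 := hα n
    have h2 := hα (n+1)
    have h3 := hmul n
    have h4 : ((b (n+1) : ℚ_[p]) + δ) * ((b n : ℚ_[p]) + δ - a n * Q n) = Q n * Q (n+1) := by
      rw [← h1, ← h2]
      linear_combination (Q n * Q (n+1) : ℚ_[p]) * h3
    have h5 := hlin ((b (n+1) : ℚ) * (b n - a n * Q n) + Δ - Q n * Q (n+1))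
      (b (n+1) + b n - a n * Q n) (by
        push_cast
        linear_combination h4 - hδ)
    linear_combination (b (n+1) : ℚ) * h5.2 - h5.1
  have hδ1 : ‖δ‖ ≤ 1 := by
    have h : ‖δ‖ ^ 2 ≤ 1 := by
      rw [← norm_pow, hδ]; exact Padic.norm_int_le_one Δ
    nlinarith [norm_nonneg δ]
  have hbδ : ∀ n, ‖(b n : ℚ_[p]) + δ‖ ≤ 1 := fun n =>
    (Padic.nonarchimedean _ _).trans (max_le (Padic.norm_int_le_one _) hδ1)
  have hcn : ∀ n, ‖(c n : ℚ_[p])‖ = 1 := by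
    intro n
    refine le_antisymm (Padic.norm_int_le_one _) ?_
    by_contra h
    exact (hrep n).2.1 (Padic.norm_intCast_lt_one_iff.mp (not_le.mp h))
  have hk : ∀ n, 1 ≤ kk (n+1) := by
    intro n
    by_contra hlt
    have hle : 0 ≤ -kk (n+1) := by omega
    have h1 : 1 < ‖αs (n+1)‖ := by
      rw [(hbcf n).2.2, norm_inv]
      exact (one_lt_inv₀ (norm_pos_iff.mpr (hne n))).mpr (hbcf n).2.1
    have h2 : 1 ≤ ‖(Q (n+1) : ℚ_[p])‖ := by
      rw [hQ, norm_mul, hcn, mul_one, Padic.norm_p_zpow]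
      exact one_le_zpow₀ (by exact_mod_cast hprime.one_le) hle
    have h3 : ‖αs (n+1)‖ * ‖(Q (n+1) : ℚ_[p])‖ ≤ 1 := by
      rw [← norm_mul, hα]; exact hbδ _
    nlinarith
  obtain ⟨f, hf, hfb⟩ := hneg
  have hbd : ∀ n, b (n+2) ^ 2 < Δ →
      b (n+2) ∈ Set.Icc (-Δ) Δ ∧ c (n+2) ∈ Set.Icc (-Δ) Δ ∧ kk (n+2) ∈ Set.Icc (-Δ) Δ := by
    intro n hb
    have hΔ0 : 0 < Δ := lt_of_le_of_lt (sq_nonneg _) hb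
    have h := hprod (n+1)
    obtain ⟨u, hu⟩ : ∃ u : ℕ, kk (n+1) = u := ⟨(kk (n+1)).toNat, by have := hk n; omega⟩
    obtain ⟨v, hv⟩ : ∃ v : ℕ, kk (n+2) = v := ⟨(kk (n+2)).toNat, by have : 1 ≤ kk (n+2) := hk (n+1); omega⟩
    have h' : (p : ℤ) ^ u * c (n+1) * ((p : ℤ) ^ v * c (n+2)) = Δ - b (n+2) ^ 2 := by
      simp only [Q, show n + 1 + 1 = n + 2 from rfl, hu, hv, zpow_natCast] at h
      exact_mod_cast h
    have hpos : 0 < Δ - b (n+2) ^ 2 := by linarith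
    have hcle : |c (n+2)| ≤ Δ := by
      have hd : c (n+2) ∣ Δ - b (n+2) ^ 2 := ⟨(p : ℤ) ^ u * c (n+1) * (p : ℤ) ^ v, by rw [← h']; ring⟩
      have := Int.le_of_dvd hpos ((abs_dvd _ _).mpr hd)
      nlinarith [sq_nonneg (b (n+2))]
    have hvle : (v : ℤ) ≤ Δ := by
      have hd : (p : ℤ) ^ v ∣ Δ - b (n+2) ^ 2 := ⟨(p : ℤ) ^ u * c (n+1) * c (n+2), by rw [← h']; ring⟩
      have h1 := Int.le_of_dvd hpos hd
      have h2 : (v : ℤ) < (p : ℤ) ^ v := by exact_mod_cast Nat.lt_pow_self hprime.one_lt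
      nlinarith [sq_nonneg (b (n+2))]
    refine ⟨⟨by nlinarith, by nlinarith⟩, abs_le.mp hcle, ⟨?_, ?_⟩⟩ <;> omega
  have hf2 : ∀ n, f (n+2) - 2 + 2 = f (n+2) := by
    intro n; have := hf.id_le (n+2); simp at this; omega
  let S : Set (ℤ × ℤ × ℤ) := Set.Icc (-Δ) Δ ×ˢ Set.Icc (-Δ) Δ ×ˢ Set.Icc (-Δ) Δ
  have hS : S.Finite := (Set.finite_Icc _ _).prod ((Set.finite_Icc _ _).prod (Set.finite_Icc _ _))
  have : Finite S := hS
  let g : ℕ → S := fun n => ⟨(b (f (n+2)), c (f (n+2)), kk (f (n+2))), by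
    have h := hbd (f (n+2) - 2)
    rw [hf2] at h
    exact h (hfb _)⟩
  obtain ⟨x, y, hxy, hg⟩ := Finite.exists_ne_map_eq_of_infinite g
  have key : ∀ x y, x < y → g x = g y → ∃ m N : ℕ, 1 ≤ N ∧ αs (m + N) = αs m := by
    intro x y hlt hg
    have hg' := congrArg Subtype.val hg
    simp only [g, Prod.mk.injEq] at hg'
    have hflt : f (x+2) < f (y+2) := hf (by omega)
    refine ⟨f (x+2), f (y+2) - f (x+2), by omega, ?_⟩
    rw [show f (x+2) + (f (y+2) - f (x+2)) = f (y+2) by omega, (hrep (f (y+2))).2.2,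
      (hrep (f (x+2))).2.2, hg'.1, hg'.2.1, hg'.2.2]
  rcases lt_or_gt_of_ne hxy with h | h
  · exact key x y h hg
  · exact key y x h hg.symm
end

section
/- Let p be an odd prime and α ∈ ℚ_p a quadratic irrational whose BCF complete quotients admit a representation α_n = (b_n + δ)/(p^{k_n} c_n) with b_n, c_n, k_n ∈ ℤ, c_n ≠ 0, p ∤ c_n, where δ ∈ ℚ_p and δ² = Δ is a non-square integer with Δ > 0. Set t = ⌊√Δ⌋ and K = (2t+1)Δ + 1 − t(t+1)(2t+1)/3. If there exists n_0 > 0 such that b_n² < Δ for every n with n_0 ≤ n ≤ n_0 + K (i.e., the real embeddings of these α_n have negative norm), then the BCF expansion of α is periodic with period length at most K: there exist m ≥ 0 and 1 ≤ N ≤ K with α_{m+N} = α_m. -/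
theorem aux_sum (Δ t : ℤ) (m : ℕ) :
    6 * ∑ i ∈ Finset.range m, (Δ - ((i : ℤ) - t) ^ 2) =
      6 * m * Δ - (m * (m - 1) * (2 * m - 1) - 6 * t * m * (m - 1) + 6 * m * t ^ 2) := by
  induction m with
  | zero => simp
  | succ k ih =>
    rw [Finset.sum_range_succ, mul_add, ih]
    push_cast
    ring

theorem aux_irr (p : ℕ) [Fact p.Prime] (δ : ℚ_[p]) (Δ : ℤ) (hδ : δ ^ 2 = (Δ : ℚ_[p]))
    (hΔ : ¬IsSquare Δ) (q : ℚ) : δ ≠ (q : ℚ_[p]) := by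
  intro h
  apply hΔ
  rw [← Rat.isSquare_intCast_iff]
  refine ⟨q, ?_⟩
  rw [h] at hδ
  have : ((Δ : ℚ) : ℚ_[p]) = ((q * q : ℚ) : ℚ_[p]) := by
    push_cast
    rw [← hδ]; ring
  exact_mod_cast this

theorem aux_split (p : ℕ) [Fact p.Prime] (δ : ℚ_[p])
    (hirr : ∀ q : ℚ, δ ≠ (q : ℚ_[p])) (x y : ℚ)
    (h : (x : ℚ_[p]) * δ = (y : ℚ_[p])) : x = 0 ∧ y = 0 := by
  have hx : x = 0 := by
    by_contra hx
    apply hirr (y / x)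
    have : (x : ℚ_[p]) ≠ 0 := by exact_mod_cast hx
    push_cast
    field_simp
    rw [← h]; ring
  refine ⟨hx, ?_⟩
  rw [hx] at h
  simp at h
  exact_mod_cast h.symm

/-- with `t = ⌊√Δ⌋` and `K = (2t+1)Δ + 1 − t(t+1)(2t+1)/3`, if the
real embeddings of the complete quotients `α_n` have negative norm
(`b_n² < Δ`) for every `n` with `n₀ ≤ n ≤ n₀ + K`, then the BCF expansion of
`α` is periodic with period length at most `K`. -/
theorem browkin_periodic_of_consecutive_negative_norms
    (p : ℕ) [Fact p.Prime] (hp : Odd p)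
    (α : ℚ_[p]) (hirr : ∀ q : ℚ, α ≠ (q : ℚ_[p]))
    (αs : ℕ → ℚ_[p]) (a : ℕ → ℚ) (hα0 : αs 0 = α) (hbcf : IsBCF p αs a)
    (δ : ℚ_[p]) (Δ : ℤ) (hδ : δ ^ 2 = (Δ : ℚ_[p])) (hΔ : ¬IsSquare Δ)
    (b c : ℕ → ℤ) (kk : ℕ → ℤ)
    (hrep : ∀ n, c n ≠ 0 ∧ ¬((p : ℤ) ∣ c n) ∧
      αs n = ((b n : ℚ_[p]) + δ) / ((p : ℚ_[p]) ^ (kk n) * (c n : ℚ_[p])))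
    (hΔpos : 0 < Δ) (t K : ℤ) (ht : t = Int.sqrt Δ)
    (hK : K = (2 * t + 1) * Δ + 1 - t * (t + 1) * (2 * t + 1) / 3)
    (n0 : ℕ) (hn0 : 0 < n0)
    (hneg : ∀ n : ℕ, n0 ≤ n → (n : ℤ) ≤ (n0 : ℤ) + K → (b n) ^ 2 < Δ) :
    ∃ m N : ℕ, 1 ≤ N ∧ (N : ℤ) ≤ K ∧ αs (m + N) = αs m := by
  have hpr : p.Prime := Fact.out
  have hp0 : (p : ℚ_[p]) ≠ 0 := by exact_mod_cast hpr.ne_zero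
  have hδi := aux_irr p δ Δ hδ hΔ
  have hδn : ‖δ‖ ≤ 1 := by
    have h1 : ‖δ‖ ^ 2 ≤ 1 := by
      rw [← norm_pow, hδ]; exact Padic.norm_int_le_one Δ
    nlinarith [norm_nonneg δ]
  have hbδ : ∀ n, (b n : ℚ_[p]) + δ ≠ 0 := by
    intro n h
    apply hδi (-(b n : ℚ))
    push_cast
    linear_combination h
  have hd0 : ∀ n, (p : ℚ_[p]) ^ (kk n) * (c n : ℚ_[p]) ≠ 0 := by
    intro n
    have : (c n : ℚ_[p]) ≠ 0 := by exact_mod_cast (hrep n).1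
    exact mul_ne_zero (zpow_ne_zero _ hp0) this
  have hα : ∀ n, αs n ≠ 0 := by
    intro n
    rw [(hrep n).2.2]
    exact div_ne_zero (hbδ n) (hd0 n)
  have hne : ∀ n, αs n - (a n : ℚ_[p]) ≠ 0 := by
    intro n h
    apply hα (n + 1)
    rw [(hbcf n).2.2, h, inv_zero]
  -- the exponents are positive
  have hk : ∀ n, 1 ≤ kk (n + 1) := by
    intro n
    by_contra hlt
    push Not at hlt
    have h1 : 1 < ‖αs (n + 1)‖ := by
      rw [(hbcf n).2.2, norm_inv]
      exact (one_lt_inv₀ (norm_pos_iff.2 (hne n))).2 (hbcf n).2.1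
    have h2 : ‖(b (n + 1) : ℚ_[p]) + δ‖ ≤ 1 :=
      (Padic.nonarchimedean _ _).trans
        (max_le (Padic.norm_int_le_one _) hδn)
    have h3 : ‖(c (n + 1) : ℚ_[p])‖ = 1 := by
      refine le_antisymm (Padic.norm_int_le_one _) ?_
      by_contra h
      push Not at h
      exact (hrep (n + 1)).2.1 (Padic.norm_intCast_lt_one_iff.1 h)
    have h4 : 1 ≤ ‖(p : ℚ_[p]) ^ kk (n + 1)‖ := by
      rw [Padic.norm_p_zpow]
      exact one_le_zpow₀ (by exact_mod_cast hpr.one_lt.le) (by omega)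
    rw [(hrep (n + 1)).2.2, norm_div, norm_mul, h3, mul_one] at h1
    have := div_le_one_of_le₀ (h2.trans h4) (norm_nonneg _)
    linarith
  -- the fundamental relation
  have hrel : ∀ n, (p : ℚ) ^ (kk n) * c n * ((p : ℚ) ^ (kk (n + 1)) * c (n + 1))
      = Δ - (b (n + 1)) ^ 2 := by
    intro n
    have h1 := (hbcf n).2.2
    have h2 : αs (n + 1) * (αs n - (a n : ℚ_[p])) = 1 := by
      rw [h1]; exact inv_mul_cancel₀ (hne n)
    rw [(hrep n).2.2, (hrep (n + 1)).2.2] at h2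
    have e0 := hd0 n
    have e1 := hd0 (n + 1)
    obtain ⟨x, hx⟩ : ∃ x : ℚ, x = (p : ℚ) ^ (kk n) * c n := ⟨_, rfl⟩
    obtain ⟨y, hy⟩ : ∃ y : ℚ, y = (p : ℚ) ^ (kk (n + 1)) * c (n + 1) := ⟨_, rfl⟩
    have hx' : (p : ℚ_[p]) ^ (kk n) * (c n : ℚ_[p]) = (x : ℚ_[p]) := by
      rw [hx]; push_cast; rfl
    have hy' : (p : ℚ_[p]) ^ (kk (n + 1)) * (c (n + 1) : ℚ_[p]) = (y : ℚ_[p]) := by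
      rw [hy]; push_cast; rfl
    rw [hx'] at h2 e0
    rw [hy'] at h2 e1
    rw [← hx, ← hy]
    have h3 : ((b (n + 1) : ℚ_[p]) + δ) * ((b n : ℚ_[p]) + δ - a n * x) = x * y := by
      have : ((b (n + 1) : ℚ_[p]) + δ) * ((b n : ℚ_[p]) + δ - a n * x)
          = x * y * (((b (n + 1) : ℚ_[p]) + δ) / y * (((b n : ℚ_[p]) + δ) / x - a n)) := by
        field_simp
      rw [this, h2, mul_one]
    have h4 := aux_split p δ hδi ((b (n + 1) : ℚ) + b n - a n * x)
      (x * y - Δ - b (n + 1) * (b n - a n * x)) (by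
        push_cast
        linear_combination h3 - hδ)
    obtain ⟨h5, h6⟩ := h4
    linear_combination h6 + (b (n + 1) : ℚ) * h5
  -- integral denominators
  obtain ⟨D, hD⟩ : ∃ D : ℕ → ℤ, ∀ n, D n = (p : ℤ) ^ (kk n).toNat * c n := ⟨_, fun _ => rfl⟩
  have hDq : ∀ n, (D (n + 1) : ℚ) = (p : ℚ) ^ (kk (n + 1)) * c (n + 1) := by
    intro n
    have h : ((kk (n + 1)).toNat : ℤ) = kk (n + 1) := Int.toNat_of_nonneg (by linarith [hk n])
    rw [hD]
    conv_rhs => rw [← h]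
    push_cast
    rw [zpow_natCast]
  have hDp : ∀ n, αs (n + 1) = ((b (n + 1) : ℚ_[p]) + δ) / (D (n + 1) : ℚ_[p]) := by
    intro n
    rw [(hrep (n + 1)).2.2]
    congr 1
    have := congrArg (fun q : ℚ => (q : ℚ_[p])) (hDq n)
    push_cast at this
    exact this.symm
  have hDrel : ∀ n, D (n + 1) * D (n + 2) = Δ - (b (n + 2)) ^ 2 := by
    intro n
    have := hrel (n + 1)
    rw [← hDq n, ← hDq (n + 1)] at this
    exact_mod_cast this
  obtain ⟨n1, rfl⟩ : ∃ n1, n0 = n1 + 1 := ⟨n0 - 1, by omega⟩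
  -- bounds
  have ht0 : 0 ≤ t := by rw [ht]; exact Int.sqrt_nonneg _
  have hbt : ∀ x : ℤ, x ^ 2 < Δ → -t ≤ x ∧ x ≤ t := by
    intro x hx
    have : Δ < (t + 1) ^ 2 := by
      rw [ht]
      have h := Nat.lt_succ_sqrt Δ.toNat
      have h' : (Δ.toNat : ℤ) = Δ := Int.toNat_of_nonneg hΔpos.le
      have h'' : (Δ.toNat : ℤ) < (Nat.sqrt Δ.toNat + 1) * (Nat.sqrt Δ.toNat + 1) := by
        exact_mod_cast h
      rw [h'] at h''
      simp only [Int.sqrt]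
      linarith
    constructor <;> nlinarith
  obtain ⟨T, rfl⟩ : ∃ T : ℕ, t = T := ⟨t.toNat, (Int.toNat_of_nonneg ht0).symm⟩
  have htt : (T : ℤ) ^ 2 ≤ Δ := by
    rw [ht]
    have h := Nat.sqrt_le Δ.toNat
    have h' : (Δ.toNat : ℤ) = Δ := Int.toNat_of_nonneg hΔpos.le
    have h'' : (Nat.sqrt Δ.toNat * Nat.sqrt Δ.toNat : ℤ) ≤ Δ.toNat := by exact_mod_cast h
    rw [h'] at h''
    simp only [Int.sqrt]
    linarith
  -- the state space
  let S : Finset (Σ _ : ℕ, ℤ) :=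
    (Finset.range (2 * T + 1)).sigma (fun i => Finset.Icc 1 (Δ - ((i : ℤ) - T) ^ 2))
  have hS : (S.card : ℤ) = K - 1 := by
    have h1 : (S.card : ℤ) = ∑ i ∈ Finset.range (2 * T + 1), (Δ - ((i : ℤ) - T) ^ 2) := by
      rw [Finset.card_sigma]
      push_cast
      apply Finset.sum_congr rfl
      intro i hi
      have hi' := Finset.mem_range.1 hi
      rw [Int.card_Icc]
      have : ((i : ℤ) - T) ^ 2 ≤ (T : ℤ) ^ 2 := by
        apply sq_le_sq'
        · linarith
        · have : (i : ℤ) ≤ 2 * T := by exact_mod_cast Nat.lt_succ_iff.1 hi'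
          linarith
      rw [Int.toNat_of_nonneg (by linarith)]
      ring
    have h2 := aux_sum Δ T (2 * T + 1)
    rw [← h1] at h2
    push_cast at h2
    have h3 : (T : ℤ) * (T + 1) * (2 * T + 1) = 3 * ((2 * T + 1) * Δ - S.card) := by
      linarith
    rw [hK, h3, Int.mul_ediv_cancel_left _ (by norm_num)]
    ring
  have hsgn : ∀ i : ℕ, (i : ℤ) + 1 ≤ K → 0 < D (n1 + i + 1) * D (n1 + i + 2) := by
    intro i hi
    rw [hDrel]
    have := hneg (n1 + i + 2) (by omega) (by push_cast; linarith)
    linarith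
  have hsgn0 : ∀ i : ℕ, (i : ℤ) ≤ K → 0 < D (n1 + 1) * D (n1 + i + 1) := by
    intro i
    induction i with
    | zero =>
      intro _
      have h0 : D (n1 + 1) ≠ 0 := by
        have := hsgn 0 (by push_cast; omega)
        intro h
        simp [h] at this
      simpa using mul_self_pos.2 h0
    | succ j ih =>
      intro hj
      push_cast at hj
      have h1 := ih (by linarith)
      have h2 := hsgn j hj
      have h3 : 0 < (D (n1 + 1) * D (n1 + (j + 1) + 1)) * (D (n1 + j + 1)) ^ 2 := by
        have := mul_pos h1 h2
        have e : n1 + (j + 1) + 1 = n1 + j + 2 := by ring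
        rw [e]
        linarith
      exact pos_of_mul_pos_left h3 (sq_nonneg _)
  let f : ℕ → (Σ _ : ℕ, ℤ) := fun i => ⟨(b (n1 + i + 2) + T).toNat, |D (n1 + i + 2)|⟩
  have hf : ∀ i ∈ Finset.range (S.card + 1), f i ∈ S := by
    intro i hi
    have hi' : (i : ℤ) + 1 ≤ K := by
      have := Finset.mem_range.1 hi
      omega
    have hb := hneg (n1 + i + 2) (by omega) (by push_cast; linarith)
    obtain ⟨hb1, hb2⟩ := hbt _ hb
    have hpos := hsgn i hi'
    have hr := hDrel (n1 + i)
    have e : (((b (n1 + i + 2) + T).toNat : ℕ) : ℤ) = b (n1 + i + 2) + T :=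
      Int.toNat_of_nonneg (by linarith)
    have hA : |D (n1 + i + 1)| * |D (n1 + i + 2)| = Δ - (b (n1 + i + 2)) ^ 2 := by
      rw [← abs_mul, abs_of_pos hpos, hr]
    have hA1 : 1 ≤ |D (n1 + i + 1)| := Int.one_le_abs (left_ne_zero_of_mul hpos.ne')
    have hA2 : 1 ≤ |D (n1 + i + 2)| := Int.one_le_abs (right_ne_zero_of_mul hpos.ne')
    simp only [S, f, Finset.mem_sigma, Finset.mem_range, Finset.mem_Icc]
    refine ⟨by omega, hA2, ?_⟩
    rw [e, add_sub_cancel_right, ← hA]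
    nlinarith
  have key : ∀ i j : ℕ, i < j → j < S.card + 1 → f i = f j →
      ∃ m N : ℕ, 1 ≤ N ∧ (N : ℤ) ≤ K ∧ αs (m + N) = αs m := by
    intro i j hij hj hfe
    refine ⟨n1 + i + 2, j - i, by omega, by omega, ?_⟩
    have e : n1 + i + 2 + (j - i) = n1 + j + 2 := by omega
    rw [e]
    simp only [f, Sigma.mk.injEq, heq_eq_eq] at hfe
    obtain ⟨h1, h2⟩ := hfe
    have bi := (hbt _ (hneg (n1 + i + 2) (by omega) (by push_cast; omega))).1
    have bj := (hbt _ (hneg (n1 + j + 2) (by omega) (by push_cast; omega))).1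
    have hb : b (n1 + j + 2) = b (n1 + i + 2) := by omega
    have s1 := hsgn0 (i + 1) (by push_cast; omega)
    have s2 := hsgn0 (j + 1) (by push_cast; omega)
    have e1 : n1 + (i + 1) + 1 = n1 + i + 2 := by ring
    have e2 : n1 + (j + 1) + 1 = n1 + j + 2 := by ring
    rw [e1] at s1
    rw [e2] at s2
    have hDe : D (n1 + j + 2) = D (n1 + i + 2) := by
      rcases abs_eq_abs.1 h2 with h | h
      · exact h.symm
      · rw [h] at s1
        linarith
    rw [hDp (n1 + j + 1), hDp (n1 + i + 1)]
    change ((b (n1 + j + 2) : ℚ_[p]) + δ) / (D (n1 + j + 2) : ℚ_[p]) =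
      ((b (n1 + i + 2) : ℚ_[p]) + δ) / (D (n1 + i + 2) : ℚ_[p])
    rw [hb, hDe]
  obtain ⟨i, hi, j, hj, hij, hfe⟩ := Finset.exists_ne_map_eq_of_card_lt_of_maps_to
    (s := Finset.range (S.card + 1)) (t := S) (by simp) hf
  have hi' := Finset.mem_range.1 hi
  have hj' := Finset.mem_range.1 hj
  rcases lt_or_gt_of_ne hij with h | h
  · exact key i j h hj' hfe
  · exact key j i h hi' hfe.symm
end

section
/- Let p be a prime, k ≥ 1 an integer, and (x_j)_{j≥0} a sequence of rationals. Consider the continued fraction with partial quotients e_{2j} = x_j/p^k and e_{2j+1} = (−1)^j/p^k for j ≥ 0, with continuant sequences (A_n), (B_n), and the continued fraction with partial quotients d_j = (−1)^j x_j/p^{2k} for j ≥ 0, with continuant sequences (A•_n), (B•_n). Then for every i ≥ 0: (a) B_{2i} = (−1)^i (B•_i − B•_{i−1}); (b) B_{2i+1} = p^{−k} B•_i; (c) A_{2i+1} = A•_i + B•_i; (d) A_{2i} = (−1)^i p^k (A•_i − A•_{i−1} + B•_i − B•_{i−1}). -/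
/-- `A`, `B` are the continuant (convergent numerator/denominator) sequences of
the continued fraction with partial quotients `a`:
`A (−1) = 1`, `A 0 = a 0`, `A n = a n * A (n−1) + A (n−2)`, and
`B (−1) = 0`, `B 0 = 1`, `B n = a n * B (n−1) + B (n−2)`. -/
def IsContinuants (a : ℕ → ℚ) (A B : ℤ → ℚ) : Prop :=
  A (-1) = 1 ∧ A 0 = a 0 ∧ B (-1) = 0 ∧ B 0 = 1 ∧
  ∀ n : ℕ, 1 ≤ n → (A n = a n * A ((n : ℤ) - 1) + A ((n : ℤ) - 2) ∧
    B n = a n * B ((n : ℤ) - 1) + B ((n : ℤ) - 2))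

/-- relations between the continuants of the continued fraction
with partial quotients `e_{2j} = x_j/p^k`, `e_{2j+1} = (−1)^j/p^k` and those of
the continued fraction with partial quotients `d_j = (−1)^j x_j / p^{2k}`. -/
theorem continuants_folding
    (p : ℕ) (hp : p.Prime) (k : ℕ) (hk : 1 ≤ k) (x : ℕ → ℚ)
    (e d : ℕ → ℚ)
    (he : ∀ j : ℕ, e (2 * j) = x j / (p : ℚ) ^ k ∧
      e (2 * j + 1) = (-1 : ℚ) ^ j / (p : ℚ) ^ k)
    (hd : ∀ j : ℕ, d j = (-1 : ℚ) ^ j * x j / (p : ℚ) ^ (2 * k))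
    (A B Ab Bb : ℤ → ℚ)
    (hAB : IsContinuants e A B) (hAbBb : IsContinuants d Ab Bb) :
    ∀ i : ℕ,
      B (2 * (i : ℤ)) = (-1 : ℚ) ^ i * (Bb (i : ℤ) - Bb ((i : ℤ) - 1)) ∧
      B (2 * (i : ℤ) + 1) = Bb (i : ℤ) / (p : ℚ) ^ k ∧
      A (2 * (i : ℤ) + 1) = Ab (i : ℤ) + Bb (i : ℤ) ∧
      A (2 * (i : ℤ)) = (-1 : ℚ) ^ i * (p : ℚ) ^ k *
        (Ab (i : ℤ) - Ab ((i : ℤ) - 1) + Bb (i : ℤ) - Bb ((i : ℤ) - 1)) := by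
  obtain ⟨a1, a0, b1, b0, h⟩ := hAB
  obtain ⟨a1', a0', b1', b0', h'⟩ := hAbBb
  have hP : (p : ℚ) ^ k ≠ 0 := pow_ne_zero _ (by exact_mod_cast hp.ne_zero)
  have hP2 : (p : ℚ) ^ (2 * k) = (p : ℚ) ^ k * (p : ℚ) ^ k := by rw [two_mul, pow_add]
  simp only [hP2] at hd
  generalize (p : ℚ) ^ k = P at *
  intro i
  induction i with
  | zero =>
    have h1 := h 1 le_rfl
    have e0 := (he 0).1
    have e1 := (he 0).2
    have d0 := hd 0
    norm_num at h1 e0 e1 d0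
    norm_num
    rw [h1.1, h1.2, a0, b0, a1, b1, a0', b0', a1', b1', e0, e1, d0]
    refine ⟨by ring, by ring, by field_simp, by field_simp; ring⟩
  | succ i ih =>
    obtain ⟨i1, i2, i3, i4⟩ := ih
    have h2 := h (2 * (i + 1)) (by omega)
    have h3 := h (2 * (i + 1) + 1) (by omega)
    have h4 := h' (i + 1) (by omega)
    rw [(he (i + 1)).1] at h2
    rw [(he (i + 1)).2] at h3
    rw [hd (i + 1)] at h4
    push_cast at h2 h3 h4 ⊢
    rw [show (2 * ((i : ℤ) + 1) - 1) = 2 * i + 1 by ring,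
      show (2 * ((i : ℤ) + 1) - 2) = 2 * i by ring, i1, i2, i3, i4] at h2
    rw [show (2 * ((i : ℤ) + 1) + 1 - 1) = 2 * (i + 1) by ring,
      show (2 * ((i : ℤ) + 1) + 1 - 2) = 2 * i + 1 by ring, i2, i3, h2.1, h2.2] at h3
    rw [show ((i : ℤ) + 1 - 1) = i by ring,
      show ((i : ℤ) + 1 - 2) = i - 1 by ring] at h4
    rw [show ((i : ℤ) + 1 - 1) = i by ring, h3.1, h3.2, h2.1, h2.2, h4.1, h4.2]
    rcases neg_one_pow_eq_or ℚ i with hs | hs <;> simp only [pow_succ, hs] <;>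
      refine ⟨?_, ?_, ?_, ?_⟩ <;> field_simp <;> ring
end

section
/- Fix an odd prime p and integers n, k ≥ 1. Define the finite sequence β_n^k of rationals of length 2^n recursively by: β_1^k = (1/p^k, 1/p^k), and if β_n^k = (b_0, b_1, …, b_{2^n−1}), then β_{n+1}^k = (b_0, 1/p^k, −b_1, −1/p^k, b_2, 1/p^k, …, (−1)^i b_i, (−1)^i/p^k, …, −b_{2^n−1}, −1/p^k) (i.e., the entries of β_{n+1}^k in positions 2i and 2i+1 are (−1)^i b_i and (−1)^i/p^k for 0 ≤ i ≤ 2^n−1). Let (A_j), (B_j) be the continuant sequences of β_n^k. Then B_{2^n−1} = 1/p^{k(2^n−1)} (so its prime-to-p numerator is 1), and the archimedean absolute value satisfies |A_{2^n−1}/A_{2^n−2}|_∞ > 4/p. In particular β_n^k is a nice BCF. -/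
/-- The integer numerator sequence `Ã` of the convergent numerators of a finite
BCF with partial quotients `a_i = ta_i / p^(kk_i)`, shifted by one:
`niceAt p ta kk (n+1) = Ã_n`, with `Ã_{−1} = 1`, `Ã_0 = ta_0` and
`Ã_n = ta_n·Ã_{n−1} + p^(kk_n + kk_{n−1})·Ã_{n−2}`. -/
def niceAt (p : ℕ) (ta : ℕ → ℤ) (kk : ℕ → ℕ) : ℕ → ℤ
  | 0 => 1
  | 1 => ta 0
  | (n + 2) => ta (n + 1) * niceAt p ta kk (n + 1)
      + (p : ℤ) ^ (kk (n + 1) + kk n) * niceAt p ta kk n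

/-- The integer numerator sequence `B̃` of the convergent denominators, shifted
by one: `niceBt p ta kk (n+1) = B̃_n`, with `B̃_{−1} = 0`, `B̃_0 = 1` and
`B̃_n = ta_n·B̃_{n−1} + p^(kk_n + kk_{n−1})·B̃_{n−2}`. -/
def niceBt (p : ℕ) (ta : ℕ → ℤ) (kk : ℕ → ℕ) : ℕ → ℤ
  | 0 => 0
  | 1 => 1
  | (n + 2) => ta (n + 1) * niceBt p ta kk (n + 1)
      + (p : ℤ) ^ (kk (n + 1) + kk n) * niceBt p ta kk n

/-- The finite BCF of length `t` with partial quotients `a_i = ta_i / p^(kk_i)`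
(`kk_i ≥ 1`, `p ∤ ta_i`, `|a_i|_∞ < p/2`, so `a_i ∈ 𝒴` and `|a_i|_p > 1`) is
*nice* if moreover: (a) `|a_0|_∞ < p/4`; (b) `|A_{t−1}/A_{t−2}|_∞ > 4/p`, which
in terms of numerators reads `|Ã_{t−1}/(p^(kk_{t−1})·Ã_{t−2})|_∞ > 4/p`;
(c) there are integers `q`, `ω ≥ 0` with `B̃_{t−1} ∣ q`, `q ∣ B̃_{t−1}²` and
`q ≡ p^ω (mod Ã_{t−1}²)`. -/
def IsNiceBCF (p t : ℕ) (ta : ℕ → ℤ) (kk : ℕ → ℕ) : Prop :=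
  1 ≤ t ∧
  (∀ i < t, 1 ≤ kk i ∧ ¬((p : ℤ) ∣ ta i) ∧
    |(ta i : ℚ)| / (p : ℚ) ^ (kk i) < (p : ℚ) / 2) ∧
  |(ta 0 : ℚ)| / (p : ℚ) ^ (kk 0) < (p : ℚ) / 4 ∧
  4 / (p : ℚ) <
    |(niceAt p ta kk t : ℚ) / ((p : ℚ) ^ (kk (t - 1)) * (niceAt p ta kk (t - 1) : ℚ))| ∧
  ∃ q : ℤ, ∃ ω : ℕ, niceBt p ta kk t ∣ q ∧ q ∣ (niceBt p ta kk t) ^ 2 ∧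
    q ≡ (p : ℤ) ^ ω [ZMOD (niceAt p ta kk t) ^ 2]

/-- The finite sequence `β_n^k` (of length `2^n`) of partial quotients:
`β_1^k = (1/p^k, 1/p^k)`, and if `β_n^k = (b_0, …, b_{2^n−1})` then
`β_{n+1}^k` has entries `(−1)^i·b_i` in position `2i` and `(−1)^i/p^k` in
position `2i+1`. -/
def betaCF (p k : ℕ) : ℕ → ℕ → ℚ
  | 0, _ => 0
  | 1, _ => 1 / (p : ℚ) ^ k
  | (n + 2), j =>
      if j % 2 = 0 then (-1 : ℚ) ^ (j / 2) * betaCF p k (n + 1) (j / 2)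
      else (-1 : ℚ) ^ (j / 2) / (p : ℚ) ^ k

def RecSeq (a F : ℕ → ℚ) : Prop := ∀ j, F (j + 2) = a (j + 1) * F (j + 1) + F j

lemma betaCF_even (p k n i : ℕ) :
    betaCF p k (n + 2) (2 * i) = (-1 : ℚ) ^ i * betaCF p k (n + 1) i := by
  have h1 : (2 * i) % 2 = 0 := by omega
  have h2 : (2 * i) / 2 = i := by omega
  simp [betaCF, h2]

lemma betaCF_odd (p k n i : ℕ) :
    betaCF p k (n + 2) (2 * i + 1) = (-1 : ℚ) ^ i * (1 / (p : ℚ) ^ k) := by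
  have h1 : (2 * i + 1) % 2 = 1 := by omega
  have h2 : (2 * i + 1) / 2 = i := by omega
  simp [betaCF, h1, h2, div_eq_mul_inv]

lemma betaCF_zero (p k n : ℕ) : betaCF p k (n + 1) 0 = 1 / (p : ℚ) ^ k := by
  induction n with
  | zero => simp [betaCF]
  | succ n ih =>
    have := betaCF_even p k n 0
    simp only [mul_zero, pow_zero, one_mul] at this
    rw [this, ih]

lemma betaCF_sign (p k n j : ℕ) :
    ∃ e : ℤ, (e = 1 ∨ e = -1) ∧ betaCF p k (n + 1) j = (e : ℚ) / (p : ℚ) ^ k := by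
  induction n generalizing j with
  | zero => exact ⟨1, Or.inl rfl, by simp [betaCF]⟩
  | succ n ih =>
    obtain ⟨i, rfl | rfl⟩ : ∃ i, j = 2 * i ∨ j = 2 * i + 1 := ⟨j / 2, by omega⟩
    · obtain ⟨e, he, h⟩ := ih i
      rw [betaCF_even, h]
      rcases neg_one_pow_eq_or ℚ i with h1 | h1
      · exact ⟨e, he, by rw [h1]; ring⟩
      · exact ⟨-e, by omega, by rw [h1]; push_cast; ring⟩
    · rw [betaCF_odd]
      rcases neg_one_pow_eq_or ℚ i with h1 | h1
      · exact ⟨1, Or.inl rfl, by rw [h1]; simp⟩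
      · exact ⟨-1, Or.inr rfl, by rw [h1]; push_cast; ring⟩

lemma contract (p k n : ℕ) (u x : ℚ) (hx : x = 1 / (p : ℚ) ^ k) (F : ℕ → ℚ)
    (hF : RecSeq (fun j => u * betaCF p k (n + 2) j) F) :
    RecSeq (fun j => (u ^ 2 * x) * betaCF p k (n + 1) j) (fun i => F (2 * i)) := by
  intro i
  have h1 := hF (2 * i)
  have h2 := hF (2 * i + 1)
  have h3 := hF (2 * i + 2)
  have e1 := betaCF_odd p k n i
  have e2 := betaCF_even p k n (i + 1)
  have e3 := betaCF_odd p k n (i + 1)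
  rw [← hx] at e1 e3
  simp only [mul_add, mul_one, add_assoc, Nat.reduceAdd, Nat.reduceMul] at *
  rw [e1] at h1
  rw [e2] at h2
  rw [e3] at h3
  rw [pow_succ] at h2 h3
  have hs : ((-1 : ℚ) ^ i) ^ 2 = 1 := by rw [← pow_mul, mul_comm, pow_mul]; simp
  generalize (-1 : ℚ) ^ i = s at *
  rw [h3, h2]
  linear_combination h1 + u ^ 2 * x * betaCF p k (n + 1) (i + 1) * F (2 * i + 2) * hs

lemma main_bounds (p k : ℕ) (x : ℚ) (hx : x = 1 / (p : ℚ) ^ k) (hx0 : 0 < x) (n : ℕ) :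
    ∀ (u w : ℚ) (A B : ℕ → ℚ) (m : ℕ), w = u * x → 0 < w → w ≤ 1 / 3 → 2 ^ (n + 1) = m + 1 →
    RecSeq (fun j => u * betaCF p k (n + 1) j) A →
    RecSeq (fun j => u * betaCF p k (n + 1) j) B →
    A 0 = 1 → A 1 = w → B 0 = 0 → B 1 = 1 →
    B (m + 1) = w ^ m ∧ 1 ≤ A (m + 1) ∧ 0 ≤ A (m + 1) - B m ∧ A (m + 1) - B m ≤ 3 * w ^ 2 ∧
    ((m = 1 ∧ A m = w ∧ A (m + 1) = w ^ 2 + 1 ∧ B m = 1) ∨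
      (3 ≤ m ∧ 0 < - A m ∧ - A m ≤ 2 * w ^ 2)) := by
  induction n with
  | zero =>
    intro u w A B m hw w0 w1 hm hA hB a0 a1 b0 b1
    obtain rfl : m = 1 := by simpa using hm.symm
    have h1 := hA 0
    have h2 := hB 0
    simp only [zero_add, betaCF, ← hx, ← hw, a0, a1, b0, b1] at h1 h2
    simp only [Nat.reduceAdd, h1, h2, a1, b1]
    refine ⟨by ring, by nlinarith, by nlinarith, by nlinarith, Or.inl ⟨trivial, trivial, by ring, trivial⟩⟩
  | succ n ih =>
    intro u w A B m' hw w0 w1 hm' hA hB a0 a1 b0 b1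
    obtain ⟨m, hm⟩ : ∃ m, 2 ^ (n + 1) = m + 1 := ⟨2 ^ (n + 1) - 1, by have := Nat.two_pow_pos (n + 1); omega⟩
    obtain rfl : m' = 2 * m + 1 := by rw [pow_succ, hm] at hm'; omega
    have hmodd : Odd m := by
      rw [pow_succ] at hm
      exact ⟨2 ^ n - 1, by have := Nat.two_pow_pos n; omega⟩
    have hm1 : 1 ≤ m := hmodd.pos
    have cA := contract p k n u x hx A hA
    have cB := contract p k n u x hx B hB
    have hA0 := hA 0
    have hB0 := hB 0
    have hAm := hA (2 * m)
    have hBm := hB (2 * m)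
    have e0 := betaCF_odd p k n 0
    have em := betaCF_odd p k n m
    rw [← hx] at e0 em
    rw [hmodd.neg_one_pow] at em
    simp only [mul_zero, zero_add, pow_zero, one_mul] at e0
    simp only [zero_add, e0, em, ← hw, a0, a1, b0, b1] at hA0 hB0 hAm hBm
    have hAm' : A (2 * m + 2) = - w * A (2 * m + 1) + A (2 * m) := by rw [hAm, hw]; ring
    have hBm' : B (2 * m + 2) = - w * B (2 * m + 1) + B (2 * m) := by rw [hBm, hw]; ring
    have hne := w0.ne'
    have hww : w ^ 2 ≤ 1 / 9 := by nlinarith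
    have key := ih (u ^ 2 * x) (w ^ 2) (fun i => A (2 * i) - B (2 * i) / w) (fun i => B (2 * i) / w) m
      (by rw [hw]; ring) (by positivity) (by linarith) hm
      (by intro i
          have h1 := cA i
          have h2 := cB i
          simp only at h1 h2 ⊢
          rw [h1, h2]; ring)
      (by intro i
          have h2 := cB i
          simp only at h2 ⊢
          rw [h2]; ring)
      (by simp [a0, b0])
      (by simp only [mul_one, hA0, hB0]; field_simp; ring)
      (by simp [b0])
      (by simp only [mul_one, hB0]; field_simp; ring)
    rw [show 2 * (m + 1) = 2 * m + 2 by ring] at key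
    obtain ⟨k1, k2, k3, k4, k5⟩ := key
    rw [show 2 * m + 1 + 1 = 2 * m + 2 by ring]
    rw [k1] at k2 k3 k4 k5
    rw [div_eq_iff hne] at k1
    have hJ : B (2 * m) / w = B (2 * m + 1) + (w ^ 2) ^ m := by
      rw [div_eq_iff hne]; linear_combination - hBm' + k1
    rw [hJ] at k3 k4 k5
    have hpos : 0 < (w ^ 2) ^ m := by positivity
    have hple : (w ^ 2) ^ m ≤ w ^ 2 := pow_le_of_le_one (by positivity) (by linarith) (by omega)
    have hw4 : (w ^ 2) ^ 2 ≤ w ^ 2 * (1 / 9) := by nlinarith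
    refine ⟨by rw [k1]; ring, by linarith, by linarith, by linarith, Or.inr ⟨by omega, ?_⟩⟩
    rcases k5 with ⟨rfl, q1, q2, q3⟩ | ⟨q1, q2, q3⟩
    · have : w * (- A (2 * 1 + 1)) = w * w ^ 3 := by
        linear_combination - hAm' + q2 - q1 - q3
      rw [mul_left_cancel₀ hne this]
      exact ⟨by positivity, by nlinarith⟩
    · have hp3 : (w ^ 2) ^ m ≤ (w ^ 2) ^ 3 := pow_le_pow_of_le_one (by positivity) (by linarith) q1
      generalize (w ^ 2) ^ m = z at *
      have e : w * (- A (2 * m + 1)) =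
        (A (2 * m + 2) - z - B (2*m+1)) - (A (2 * m) - (B (2 * m + 1) + z)) := by
        linear_combination - hAm'
      constructor
      · refine pos_of_mul_pos_right (a := w) ?_ w0.le
        rw [e]; linarith
      · refine le_of_mul_le_mul_left (a := w) ?_ w0
        rw [e]
        have h3 : 0 < w ^ 3 := by positivity
        have h27 : w ^ 3 ≤ 1 / 27 := by nlinarith
        have t1 : (w ^ 2) ^ 3 ≤ w ^ 3 * (1 / 27) := by
          have := mul_le_mul_of_nonneg_left h27 h3.le
          calc (w ^ 2) ^ 3 = w ^ 3 * w ^ 3 := by ring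
            _ ≤ _ := this
        have t2 : (w ^ 2) ^ 2 ≤ w ^ 3 * (1 / 3) := by
          have := mul_le_mul_of_nonneg_left w1 h3.le
          calc (w ^ 2) ^ 2 = w ^ 3 * w := by ring
            _ ≤ _ := this
        rw [show w * (2 * w ^ 2) = 2 * w ^ 3 by ring]
        linarith

/-- for every odd prime `p` and `n, k ≥ 1`, the continuants of
`β_n^k` satisfy `B_{2^n−1} = 1/p^{k(2^n−1)}` (so its prime-to-`p` numerator is
`1`) and `|A_{2^n−1}/A_{2^n−2}|_∞ > 4/p`; in particular `β_n^k` is a nice BCF. -/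
theorem betaCF_is_nice
    (p : ℕ) [Fact p.Prime] (hp : Odd p) (n k : ℕ) (hn : 1 ≤ n) (hk : 1 ≤ k)
    (A B : ℤ → ℚ) (hAB : IsContinuants (betaCF p k n) A B) :
    B ((2 ^ n : ℤ) - 1) = 1 / (p : ℚ) ^ (k * (2 ^ n - 1)) ∧
    4 / (p : ℚ) < |A ((2 ^ n : ℤ) - 1) / A ((2 ^ n : ℤ) - 2)| ∧
    ∃ ta : ℕ → ℤ, ∃ kk : ℕ → ℕ,
      (∀ j < 2 ^ n, (ta j : ℚ) / (p : ℚ) ^ (kk j) = betaCF p k n j) ∧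
      IsNiceBCF p (2 ^ n) ta kk := by
  obtain ⟨n, rfl⟩ : ∃ n', n = n' + 1 := ⟨n - 1, by omega⟩
  have hp3 : 3 ≤ p := by
    have h2 := (Fact.out : p.Prime).two_le
    rcases hp with ⟨c, hc⟩
    omega
  have hpQ : (3 : ℚ) ≤ p := by exact_mod_cast hp3
  have hp0 : (0 : ℚ) < p := by linarith
  have hP : (p : ℚ) ≤ (p : ℚ) ^ k := le_self_pow₀ (by linarith) (by omega)
  have hP0 : (0 : ℚ) < (p : ℚ) ^ k := by positivity
  have hx3 : 1 / (p : ℚ) ^ k ≤ 1 / 3 := one_div_le_one_div_of_le (by norm_num) (by linarith)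
  obtain ⟨m, hm⟩ : ∃ m, 2 ^ (n + 1) = m + 1 :=
    ⟨2 ^ (n + 1) - 1, by have := Nat.two_pow_pos (n + 1); omega⟩
  have hmZ : (2 : ℤ) ^ (n + 1) = m + 1 := by exact_mod_cast hm
  obtain ⟨hA1, hA0, hB1, hB0, hrec⟩ := hAB
  rw [betaCF_zero] at hA0
  have recA : RecSeq (betaCF p k (n + 1)) (fun j => A ((j : ℤ) - 1)) := by
    intro j
    have := (hrec (j + 1) (by omega)).1
    push_cast at this ⊢
    convert this using 3 <;> ring_nf
  have recB : RecSeq (betaCF p k (n + 1)) (fun j => B ((j : ℤ) - 1)) := by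
    intro j
    have := (hrec (j + 1) (by omega)).2
    push_cast at this ⊢
    convert this using 3 <;> ring_nf
  obtain ⟨k1, k2, k3, k4, k5⟩ := main_bounds p k (1 / (p : ℚ) ^ k) rfl (by positivity) n 1
    (1 / (p : ℚ) ^ k) (fun j => A ((j : ℤ) - 1)) (fun j => B ((j : ℤ) - 1)) m (by ring)
    (by positivity) hx3 hm (by simpa using recA) (by simpa using recB)
    (by simpa using hA1) (by simpa using hA0) (by simpa using hB1) (by simpa using hB0)
  simp only [Nat.cast_add, Nat.cast_one, add_sub_cancel_right] at k1 k2 k3 k4 k5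
  have i1 : (2 : ℤ) ^ (n + 1) - 1 = m := by omega
  have i2 : (2 : ℤ) ^ (n + 1) - 2 = (m : ℤ) - 1 := by omega
  have hB : B m = 1 / (p : ℚ) ^ (k * m) := by rw [k1, pow_mul, div_pow, one_pow]
  have hH : A ((m : ℤ) - 1) ≠ 0 ∧ |A ((m : ℤ) - 1)| ≤ 1 / 3 := by
    have hx0 : 0 < 1 / (p : ℚ) ^ k := by positivity
    rcases k5 with ⟨-, q, -, -⟩ | ⟨-, q1, q2⟩
    · rw [q, abs_of_pos hx0]
      exact ⟨hx0.ne', hx3⟩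
    · have hneg : A ((m : ℤ) - 1) < 0 := by linarith
      rw [abs_of_neg hneg]
      exact ⟨hneg.ne, by nlinarith⟩
  have hratio : 4 / (p : ℚ) < |A m / A ((m : ℤ) - 1)| := by
    have h0 : 0 < |A ((m : ℤ) - 1)| := abs_pos.mpr hH.1
    rw [abs_div, lt_div_iff₀ h0, abs_of_nonneg (by linarith : 0 ≤ A m)]
    have h4 : 4 / (p : ℚ) ≤ 4 / 3 := div_le_div_of_nonneg_left (by norm_num) (by norm_num) hpQ
    have : 4 / (p : ℚ) * |A ((m : ℤ) - 1)| ≤ 4 / 3 * (1 / 3) :=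
      mul_le_mul h4 hH.2 h0.le (by norm_num)
    linarith
  rw [i1, i2]
  refine ⟨by rw [hm]; simpa using hB, hratio, ?_⟩
  choose e he hb using betaCF_sign p k n
  have he0 : e 0 = 1 := by
    have h := hb 0
    rw [betaCF_zero] at h
    rw [div_left_inj' hP0.ne'] at h
    exact_mod_cast h.symm
  have habs : ∀ i, |(e i : ℚ)| = 1 := by
    intro i
    rcases he i with h | h <;> simp [h]
  have tA : ∀ j, (niceAt p e (fun _ => k) j : ℚ) = ((p : ℚ) ^ k) ^ j * A ((j : ℤ) - 1) ∧
      (niceAt p e (fun _ => k) (j + 1) : ℚ) = ((p : ℚ) ^ k) ^ (j + 1) * A (j : ℤ) := by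
    intro j
    induction j with
    | zero =>
      simp [niceAt, hA1, hA0, he0]
      try field_simp
    | succ j ih =>
      refine ⟨by simpa using ih.2, ?_⟩
      have := recA j
      simp only at this
      push_cast at this
      rw [show (j : ℤ) + 2 - 1 = j + 1 by ring, add_sub_cancel_right, hb] at this
      simp only [niceAt]
      push_cast
      have hc : (p : ℚ) ^ k * ((e (j + 1) : ℚ) / (p : ℚ) ^ k) = e (j + 1) := by field_simp
      rw [ih.1, ih.2, this, pow_add _ k k]
      linear_combination - ((p : ℚ) ^ k) ^ (j + 1) * A j * hc
  have tB : ∀ j, (niceBt p e (fun _ => k) j : ℚ) * (p : ℚ) ^ k = ((p : ℚ) ^ k) ^ j * B ((j : ℤ) - 1) ∧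
      (niceBt p e (fun _ => k) (j + 1) : ℚ) = ((p : ℚ) ^ k) ^ j * B (j : ℤ) := by
    intro j
    induction j with
    | zero =>
      simp [niceBt, hB1, hB0]
    | succ j ih =>
      refine ⟨by rw [ih.2]; push_cast; rw [add_sub_cancel_right]; ring, ?_⟩
      have := recB j
      simp only at this
      push_cast at this
      rw [show (j : ℤ) + 2 - 1 = j + 1 by ring, add_sub_cancel_right, hb] at this
      simp only [niceBt]
      push_cast
      have hc : (p : ℚ) ^ k * ((e (j + 1) : ℚ) / (p : ℚ) ^ k) = e (j + 1) := by field_simp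
      rw [ih.2, this, pow_add _ k k]
      linear_combination (p : ℚ) ^ k * ih.1 - ((p : ℚ) ^ k) ^ j * B j * hc
  have hBt : niceBt p e (fun _ => k) (m + 1) = 1 := by
    have h := (tB m).2
    rw [hB, ← pow_mul, mul_one_div_cancel (by positivity)] at h
    exact_mod_cast h
  refine ⟨e, fun _ => k, fun j _ => (hb j).symm, Nat.one_le_two_pow, ?_, ?_, ?_, 1, 0, ?_, ?_, ?_⟩
  · intro i _
    refine ⟨hk, ?_, ?_⟩
    · intro hd
      have h1 : (p : ℤ) ∣ 1 := by
        rcases he i with h | h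
        · rwa [h] at hd
        · rw [h] at hd; exact (dvd_neg).mp hd
      have := Int.le_of_dvd one_pos h1
      omega
    · rw [habs]; linarith
  · rw [habs]; linarith
  · rw [hm, add_tsub_cancel_right, (tA m).2, (tA m).1]
    convert hratio using 2
    rw [pow_succ]
    field_simp
  · rw [hm, hBt]
  · rw [hm, hBt]; norm_num
  · simp
end

section
/- Fix an odd prime p and let (a_0, …, a_{t−1}) be a nice BCF, with a_i = ã_i/p^{k_i} as in the definition. Then for every bound M ≥ 0 there exist c ∈ 𝒴, setting a_t := 2c, with a_t ∈ 𝒴 and v_p(a_t) < −M, and an integer m with p ∤ m, such that the infinite eventually periodic continued fraction [a_0; a_1, …, a_{t−1}, a_t, a_{t−1}, …, a_1, 2a_0 repeated] (partial quotients a_0 followed by the period (a_1, …, a_{t−1}, a_t, a_{t−1}, …, a_1, 2a_0) repeated forever) converges in ℚ_p — its convergents A_n/B_n tend p-adically to a limit β — and the limit satisfies p^{2k_0}·m·β² = 1; that is, β = 1/(p^{k_0}√m) for a square root √m of m in ℚ_p. -/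
theorem nb_coprimeA (p : ℕ) (hp : p.Prime) (ta : ℕ → ℤ) (kk : ℕ → ℕ) (t : ℕ)
    (h : ∀ i < t, 1 ≤ kk i ∧ ¬((p : ℤ) ∣ ta i)) :
    ∀ n, (n ≤ t → ¬ (p : ℤ) ∣ niceAt p ta kk n) ∧
      (n + 1 ≤ t → ¬ (p : ℤ) ∣ niceAt p ta kk (n + 1)) := by
  have hpi : Prime (p : ℤ) := Nat.prime_iff_prime_int.mp hp
  intro n
  induction n with
  | zero =>
    refine ⟨fun _ hd => ?_, fun h1 => ?_⟩
    · exact hpi.not_isUnit (isUnit_of_dvd_one (by simpa [niceAt] using hd))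
    · simpa [niceAt] using (h 0 (by omega)).2
  | succ n ih =>
    refine ⟨ih.2, fun h1 hd => ?_⟩
    rw [niceAt] at hd
    have h2 : (p : ℤ) ∣ (p : ℤ) ^ (kk (n + 1) + kk n) * niceAt p ta kk n :=
      Dvd.dvd.mul_right (dvd_pow_self _ (by have := (h (n+1) (by omega)).1; omega)) _
    have h3 := (Int.dvd_add_left h2).1 hd
    rcases hpi.dvd_or_dvd h3 with h4 | h4
    · exact (h (n+1) (by omega)).2 h4
    · exact ih.2 (by omega) h4

theorem nb_coprimeB (p : ℕ) (hp : p.Prime) (ta : ℕ → ℤ) (kk : ℕ → ℕ) (t : ℕ)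
    (h : ∀ i < t, 1 ≤ kk i ∧ ¬((p : ℤ) ∣ ta i)) :
    ∀ n, (n + 1 ≤ t → ¬ (p : ℤ) ∣ niceBt p ta kk (n + 1)) := by
  have hpi : Prime (p : ℤ) := Nat.prime_iff_prime_int.mp hp
  intro n
  induction n with
  | zero =>
    intro _ hd
    exact hpi.not_isUnit (isUnit_of_dvd_one (by simpa [niceBt] using hd))
  | succ n ih =>
    intro h1 hd
    rw [niceBt] at hd
    have h2 : (p : ℤ) ∣ (p : ℤ) ^ (kk (n + 1) + kk n) * niceBt p ta kk n :=
      Dvd.dvd.mul_right (dvd_pow_self _ (by have := (h (n+1) (by omega)).1; omega)) _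
    have h3 := (Int.dvd_add_left h2).1 hd
    rcases hpi.dvd_or_dvd h3 with h4 | h4
    · exact (h (n+1) (by omega)).2 h4
    · exact ih (by omega) h4

theorem nb_det (p : ℕ) (ta : ℕ → ℤ) (kk : ℕ → ℕ) (n : ℕ) :
    ∃ δ : ℤ, ∃ r : ℕ, δ * δ = 1 ∧
      niceAt p ta kk (n + 1) * niceBt p ta kk n - niceAt p ta kk n * niceBt p ta kk (n + 1)
        = δ * (p : ℤ) ^ r := by
  induction n with
  | zero => exact ⟨-1, 0, by norm_num, by simp [niceAt, niceBt]⟩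
  | succ n ih =>
    obtain ⟨δ, r, h1, h2⟩ := ih
    refine ⟨-δ, kk (n + 1) + kk n + r, by linarith [neg_mul_neg δ δ], ?_⟩
    rw [niceAt, niceBt, pow_add _ _ r]
    linear_combination (-(p : ℤ) ^ (kk (n + 1) + kk n)) * h2

/-- The elementary matrix of a partial quotient. -/
def nbD (x : ℚ) : Matrix (Fin 2) (Fin 2) ℚ := !![x, 1; 1, 0]

/-- Product of the first `n` elementary matrices. -/
def nbP (e : ℕ → ℚ) : ℕ → Matrix (Fin 2) (Fin 2) ℚ
  | 0 => 1
  | n + 1 => nbP e n * nbD (e n)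

theorem nbD_transpose (x : ℚ) : (nbD x).transpose = nbD x := by
  ext i j; fin_cases i <;> fin_cases j <;> rfl

theorem nbP_congr (e f : ℕ → ℚ) (n : ℕ) (h : ∀ i < n, e i = f i) : nbP e n = nbP f n := by
  induction n with
  | zero => rfl
  | succ n ih => rw [nbP, nbP, ih (fun i hi => h i (by omega)), h n (by omega)]

theorem nbP_cont (e : ℕ → ℚ) (A B : ℤ → ℚ) (h : IsContinuants e A B) (n : ℕ) :
    nbP e (n + 1) = !![A n, A ((n : ℤ) - 1); B n, B ((n : ℤ) - 1)] := by
  obtain ⟨h1, h2, h3, h4, h5⟩ := h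
  induction n with
  | zero => simp [nbP, nbD, h1, h2, h3, h4]
  | succ n ih =>
    rw [nbP, ih, nbD]
    obtain ⟨h6, h7⟩ := h5 (n + 1) (by omega)
    have e1 : ((n + 1 : ℕ) : ℤ) - 1 = n := by push_cast; ring
    have e2 : ((n + 1 : ℕ) : ℤ) - 2 = n - 1 := by push_cast; ring
    rw [e1, e2] at h6 h7
    rw [e1, h6, h7]
    ext i j; fin_cases i <;> fin_cases j <;> simp [Matrix.mul_apply, Fin.sum_univ_two] <;> ring

theorem nbP_nice (p : ℕ) (hp : p.Prime) (ta : ℕ → ℤ) (kk : ℕ → ℕ) (a : ℕ → ℚ)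
    (ha : ∀ i, a i = (ta i : ℚ) / (p : ℚ) ^ (kk i)) (n : ℕ) :
    ∃ S : ℕ, nbP a (n + 1) =
      !![(niceAt p ta kk (n + 1) : ℚ) / (p : ℚ) ^ (S + kk n), (niceAt p ta kk n : ℚ) / (p : ℚ) ^ S;
        (p : ℚ) ^ kk 0 * (niceBt p ta kk (n + 1) : ℚ) / (p : ℚ) ^ (S + kk n),
        (p : ℚ) ^ kk 0 * (niceBt p ta kk n : ℚ) / (p : ℚ) ^ S] := by
  have hp0 : (p : ℚ) ≠ 0 := by exact_mod_cast hp.ne_zero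
  induction n with
  | zero =>
    refine ⟨0, ?_⟩
    simp [nbP, nbD, ha, niceAt, niceBt, hp0]
  | succ n ih =>
    obtain ⟨S, ih⟩ := ih
    refine ⟨S + kk n, ?_⟩
    rw [nbP, ih, nbD, niceAt, niceBt, ha]
    ext i j; fin_cases i <;> fin_cases j <;>
      simp [Matrix.mul_apply, Fin.sum_univ_two] <;> field_simp <;> ring

theorem nb_norm (p : ℕ) [Fact p.Prime] (z : ℤ) (k : ℕ) (hz : ¬ (p : ℤ) ∣ z) (hk : 1 ≤ k) :
    2 ≤ ‖(((z : ℚ) / (p : ℚ) ^ k : ℚ) : ℚ_[p])‖ := by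
  have hp : p.Prime := Fact.out
  have h1 : ‖(z : ℚ_[p])‖ = 1 := by
    refine le_antisymm (Padic.norm_int_le_one z) (not_lt.1 fun h => hz ?_)
    exact (Padic.norm_intCast_lt_one_iff).1 h
  push_cast
  rw [norm_div, norm_pow, h1, Padic.norm_p, inv_pow, one_div, inv_inv]
  have h2 : (2 : ℝ) ≤ p := by exact_mod_cast hp.two_le
  calc (2 : ℝ) ≤ p := h2
    _ ≤ (p : ℝ) ^ k := le_self_pow₀ (by linarith) (by omega)

theorem nb_conv (p : ℕ) [Fact p.Prime] (e : ℕ → ℚ) (A B : ℤ → ℚ) (h : IsContinuants e A B)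
    (he : ∀ n, 2 ≤ ‖(e (n + 1) : ℚ_[p])‖) :
    (∀ n : ℕ, B n ≠ 0) ∧ ∃ β : ℚ_[p],
      Filter.Tendsto (fun nn : ℕ => ((A nn / B nn : ℚ) : ℚ_[p])) Filter.atTop (nhds β) := by
  have hc := nbP_cont e A B h
  obtain ⟨h1, h2, h3, h4, h5⟩ := h
  have key : ∀ n : ℕ, (2 : ℝ) ^ n ≤ ‖(B n : ℚ_[p])‖ ∧
      ‖(B ((n : ℤ) - 1) : ℚ_[p])‖ < ‖(B n : ℚ_[p])‖ := by
    intro n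
    induction n with
    | zero => simp [h3, h4]
    | succ n ih =>
      obtain ⟨-, h7⟩ := h5 (n + 1) (by omega)
      have e1 : ((n + 1 : ℕ) : ℤ) - 1 = n := by push_cast; ring
      have e2 : ((n + 1 : ℕ) : ℤ) - 2 = n - 1 := by push_cast; ring
      rw [e1, e2] at h7
      have hpos : 0 < ‖(B n : ℚ_[p])‖ := lt_of_lt_of_le (by positivity) ih.1
      have h8 : 2 * ‖(B n : ℚ_[p])‖ ≤ ‖(e (n + 1) : ℚ_[p]) * (B n : ℚ_[p])‖ := by
        rw [norm_mul]; exact mul_le_mul_of_nonneg_right (he n) hpos.le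
      have h9 : ‖(B ((n + 1 : ℕ) : ℤ) : ℚ_[p])‖ = ‖(e (n + 1) : ℚ_[p]) * (B n : ℚ_[p])‖ := by
        rw [h7]; push_cast
        rw [Padic.add_eq_max_of_ne, max_eq_left] <;> linarith [ih.2]
      rw [e1, h9, pow_succ]
      constructor <;> linarith [ih.1]
  have hB : ∀ n : ℕ, B n ≠ 0 := by
    intro n hn
    have := (key n).1
    rw [hn] at this
    simp at this
    linarith [show (0 : ℝ) < 2 ^ n by positivity]
  refine ⟨hB, cauchySeq_tendsto_of_complete ?_⟩
  refine cauchySeq_of_le_geometric (1 / 2) 1 (by norm_num) fun n => ?_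
  have hdet : ∀ n : ℕ, (nbP e n).det = (-1) ^ n := by
    intro n
    induction n with
    | zero => simp [nbP]
    | succ n ih => rw [nbP, Matrix.det_mul, ih, pow_succ]; simp [nbD, Matrix.det_fin_two]
  have hd := hdet (n + 1 + 1)
  rw [hc, Matrix.det_fin_two] at hd
  simp only [Matrix.of_apply, Matrix.cons_val', Matrix.cons_val_zero, Matrix.cons_val_one,
    Matrix.cons_val_fin_one] at hd
  rw [show ((n + 1 : ℕ) : ℤ) - 1 = n by push_cast; ring] at hd
  have hq : A n / B n - A (n + 1 : ℕ) / B (n + 1 : ℕ) = -(-1) ^ (n + 1 + 1) / (B n * B (n + 1 : ℕ)) := by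
    rw [← hd]; have := hB n; have := hB (n + 1); field_simp; ring
  rw [dist_eq_norm, ← Rat.cast_sub, hq]
  push_cast
  rw [norm_div, norm_neg, norm_pow, norm_neg, norm_one, one_pow, norm_mul, one_mul, one_div_pow]
  apply one_div_le_one_div_of_le (by positivity)
  have k1 := (key n).1
  have k2 := (key (n + 1)).1
  push_cast at k2
  have k3 : (1 : ℝ) ≤ 2 ^ (n + 1) := one_le_pow₀ (by norm_num)
  nlinarith [show (0 : ℝ) < 2 ^ n by positivity]

/-- The arithmetic heart: construction of the numerator of `c`. -/
theorem nb_arith (p : ℕ) (hp : p.Prime) (At At' Bt Bt' q δ : ℤ) (ω r k' K : ℕ)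
    (hA : ¬ (p : ℤ) ∣ At) (hB : ¬ (p : ℤ) ∣ Bt) (hδ : δ * δ = 1)
    (hdet : At * Bt' - At' * Bt = δ * (p : ℤ) ^ r)
    (hq1 : Bt ∣ q) (hq2 : q ∣ Bt ^ 2) (hq3 : q ≡ (p : ℤ) ^ ω [ZMOD At ^ 2])
    (hη : (p : ℚ) ^ k' * |(At' : ℚ)| / |(At : ℚ)| < p / 4) :
    ∃ c m : ℤ, ∃ k : ℕ, K ≤ k ∧ ¬ (p : ℤ) ∣ c ∧ ¬ (p : ℤ) ∣ m ∧ |(c : ℚ)| / (p : ℚ) ^ k < p / 4 ∧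
      c * At + (p : ℤ) ^ (k + k') * At' ≠ 0 ∧
      At * (c * At + (p : ℤ) ^ (k + k') * At') * m
        = Bt * (c * Bt + (p : ℤ) ^ (k + k') * Bt') := by
  have hpi : Prime (p : ℤ) := Nat.prime_iff_prime_int.mp hp
  have hp0 : (p : ℚ) ≠ 0 := by exact_mod_cast hp.ne_zero
  have hppos : (0 : ℚ) < p := by exact_mod_cast hp.pos
  have hA0 : At ≠ 0 := by rintro rfl; exact hA (dvd_zero _)
  have hB0 : Bt ≠ 0 := by rintro rfl; exact hB (dvd_zero _)
  obtain ⟨d, rfl⟩ := hq1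
  have hdB : d ∣ Bt := by
    rw [pow_two] at hq2; exact Int.dvd_of_mul_dvd_mul_left hB0 hq2
  obtain ⟨f, hf⟩ := hdB
  have hd : ¬ (p : ℤ) ∣ d := fun h => hB (hf ▸ Dvd.dvd.mul_right h f)
  have hd0 : d ≠ 0 := by rintro rfl; exact hd (dvd_zero _)
  -- bound
  obtain ⟨K0, hK0⟩ : ∃ K0 : ℕ, ∀ k, K0 ≤ k →
      |(d : ℚ)| / |(At : ℚ)| / (p : ℚ) ^ k < p / 4 - (p : ℚ) ^ k' * |(At' : ℚ)| / |(At : ℚ)| := by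
    have hpos : 0 < (p : ℚ) / 4 - (p : ℚ) ^ k' * |(At' : ℚ)| / |(At : ℚ)| := by linarith
    obtain ⟨N, hN⟩ := pow_unbounded_of_one_lt
      (|(d : ℚ)| / |(At : ℚ)| / ((p : ℚ) / 4 - (p : ℚ) ^ k' * |(At' : ℚ)| / |(At : ℚ)|))
      (show (1 : ℚ) < p by exact_mod_cast hp.one_lt)
    refine ⟨N, fun k hk => ?_⟩
    rw [div_lt_iff₀ (by positivity), mul_comm]
    rw [div_lt_iff₀ hpos] at hN
    refine lt_of_lt_of_le hN (mul_le_mul_of_nonneg_right ?_ hpos.le)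
    exact pow_le_pow_right₀ (by exact_mod_cast hp.one_lt.le) hk
  have hcopA : IsCoprime (p : ℤ) At := (hpi.coprime_iff_not_dvd).2 hA
  have hcop : IsCoprime At Bt := by
    have h1 : IsCoprime At ((p : ℤ) ^ r) := hcopA.symm.pow_right
    have h2 : IsCoprime At (δ * (p : ℤ) ^ r) :=
      IsCoprime.mul_right ⟨0, δ, by linarith⟩ h1
    rw [← hdet] at h2
    obtain ⟨u, v, huv⟩ := h2
    exact ⟨u + v * Bt', -v * At', by linear_combination huv⟩
  -- exponent
  set φ := Nat.totient (At ^ 2).natAbs with hφ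
  have hφpos : 0 < φ := Nat.totient_pos.2 (Int.natAbs_pos.2 (pow_ne_zero 2 hA0))
  have hpow : (p : ℤ) ^ φ ≡ 1 [ZMOD At ^ 2] := by
    have h1 : Nat.Coprime p (At ^ 2).natAbs := by
      have := (hcopA.pow_right (n := 2))
      rw [Int.isCoprime_iff_gcd_eq_one] at this
      simpa [Int.gcd] using this
    have h2 := Nat.ModEq.pow_totient h1
    have h3 := (Int.natCast_modEq_iff).2 h2
    push_cast at h3
    rw [Int.modEq_iff_dvd] at h3 ⊢
    simpa [hφ, Int.natAbs_pow] using h3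
  obtain ⟨k, L, hk, hkK, hkK0⟩ : ∃ k L : ℕ, k + k' + r = ω + φ * L ∧ K + 1 ≤ k ∧ K0 ≤ k := by
    have : K + 1 + K0 + k' + r ≤ φ * (K + 1 + K0 + k' + r) := Nat.le_mul_of_pos_left _ hφpos
    exact ⟨ω + φ * (K + 1 + K0 + k' + r) - k' - r, K + 1 + K0 + k' + r,
      by omega, by omega, by omega⟩
  have hqq : At ^ 2 ∣ Bt * d - (p : ℤ) ^ (k + k') * (p : ℤ) ^ r := by
    rw [← pow_add, hk, pow_add, pow_mul]
    have h1 : (p : ℤ) ^ ω * ((p : ℤ) ^ φ) ^ L ≡ Bt * d [ZMOD At ^ 2] := by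
      have := (hq3.symm).mul (hpow.pow L)
      simpa using this
    exact (Int.modEq_iff_dvd).1 h1
  set Q := (p : ℤ) ^ (k + k') with hQ
  have hpQ : (p : ℤ) ∣ Q := dvd_pow_self _ (by omega)
  have hmain : At ^ 2 ∣ Bt * (-δ * d - Q * At') + Q * Bt' * At := by
    have : Bt * (-δ * d - Q * At') + Q * Bt' * At = -δ * (Bt * d - Q * (p : ℤ) ^ r) := by
      linear_combination Q * hdet
    rw [this]; exact Dvd.dvd.mul_left hqq _
  have hdv : At ∣ -δ * d - Q * At' := by
    have h1 : At ∣ Bt * (-δ * d - Q * At') + Q * Bt' * At :=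
      (dvd_pow_self At two_ne_zero).trans hmain
    exact hcop.dvd_of_dvd_mul_left ((Int.dvd_add_left (Dvd.intro_left _ rfl)).1 h1)
  obtain ⟨c, hc⟩ := hdv
  have hX : c * At + Q * At' = -δ * d := by linarith
  have hY : At ∣ c * Bt + Q * Bt' := by
    rw [hc, show Bt * (At * c) + Q * Bt' * At = At * (c * Bt + Q * Bt') by ring, pow_two] at hmain
    exact Int.dvd_of_mul_dvd_mul_left hA0 hmain
  obtain ⟨g, hg⟩ := hY
  have hδd : ¬ (p : ℤ) ∣ -δ * d := by
    intro h
    apply hd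
    have : d = -δ * (-δ * d) := by linear_combination (-d) * hδ
    rw [this]; exact Dvd.dvd.mul_left h _
  have hcp : ¬ (p : ℤ) ∣ c := by
    intro h
    apply hδd
    rw [← hX]
    exact dvd_add (Dvd.dvd.mul_right h _) (Dvd.dvd.mul_right hpQ _)
  have hδ0 : δ ≠ 0 := by rintro rfl; simp at hδ
  have hm : At * (c * At + Q * At') * (-δ * f * g) = Bt * (c * Bt + Q * Bt') := by
    rw [hX, hg]
    linear_combination (At * d * f * g) * hδ - At * g * hf
  refine ⟨c, -δ * f * g, k, by omega, hcp, ?_, ?_, ?_, hm⟩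
  · intro h
    have h1 : (p : ℤ) ∣ Bt * (c * Bt + Q * Bt') := by rw [← hm]; exact Dvd.dvd.mul_left h _
    rcases hpi.dvd_or_dvd h1 with h2 | h2
    · exact hB h2
    · rcases hpi.dvd_or_dvd ((Int.dvd_add_left (Dvd.dvd.mul_right hpQ _)).1 h2) with h3 | h3
      · exact hcp h3
      · exact hB h3
  · have hAq : (0 : ℚ) < |(At : ℚ)| := abs_pos.2 (by exact_mod_cast hA0)
    have hcq : (c : ℚ) * At = -δ * d - (p : ℚ) ^ (k + k') * At' := by
      have : ((c * At + Q * At' : ℤ) : ℚ) = ((-δ * d : ℤ) : ℚ) := by rw [hX]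
      rw [hQ] at this
      push_cast at this
      linarith
    have hδa : |(δ : ℚ)| = 1 := by
      have : (δ : ℚ) * δ = 1 := by exact_mod_cast hδ
      rcases mul_self_eq_one_iff.1 this with h | h <;> simp [h]
    have hle : |(c : ℚ)| * |(At : ℚ)| ≤ |(d : ℚ)| + (p : ℚ) ^ (k + k') * |(At' : ℚ)| := by
      rw [← abs_mul, hcq]
      refine (abs_sub _ _).trans ?_
      rw [abs_mul, abs_mul, abs_neg, hδa, one_mul, abs_of_pos (show (0:ℚ) < (p : ℚ) ^ (k + k') by positivity)]
    have h1 := hK0 k hkK0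
    have h2 : |(c : ℚ)| ≤ (|(d : ℚ)| + (p : ℚ) ^ (k + k') * |(At' : ℚ)|) / |(At : ℚ)| := by
      rw [le_div_iff₀ hAq]; exact hle
    have h3 : |(c : ℚ)| / (p : ℚ) ^ k ≤ (|(d : ℚ)| + (p : ℚ) ^ (k + k') * |(At' : ℚ)|) / |(At : ℚ)| / (p : ℚ) ^ k :=
      div_le_div_of_nonneg_right h2 (by positivity)
    have h4 : (|(d : ℚ)| + (p : ℚ) ^ (k + k') * |(At' : ℚ)|) / |(At : ℚ)| / (p : ℚ) ^ k
        = |(d : ℚ)| / |(At : ℚ)| / (p : ℚ) ^ k + (p : ℚ) ^ k' * |(At' : ℚ)| / |(At : ℚ)| := by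
      rw [pow_add]; field_simp
    linarith
  · rw [hX]; exact mul_ne_zero (neg_ne_zero.2 hδ0) hd0

/-- The palindromic period gives `β² n₂₂ = n₁₁`. -/
theorem nb_period (t : ℕ) (ht : 1 ≤ t) (a e : ℕ → ℚ) (c : ℚ) (e0 : e 0 = a 0)
    (he : ∀ j : ℕ, ∀ i < 2 * t,
            (i < t - 1 → e (1 + 2 * t * j + i) = a (i + 1)) ∧
            (i = t - 1 → e (1 + 2 * t * j + i) = 2 * c) ∧
            (t - 1 < i → i < 2 * t - 1 → e (1 + 2 * t * j + i) = a (2 * t - 1 - i)) ∧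
            (i = 2 * t - 1 → e (1 + 2 * t * j + i) = 2 * a 0)) :
    ∀ j : ℕ, nbP e (2 * t * (j + 2)) =
      (nbP a t * nbD (2 * c) * (nbP a t).transpose) * !![0, 1; 1, 0] * nbP e (2 * t * (j + 1)) := by
  have hPt : nbP e t = nbP a t := by
    apply nbP_congr
    intro i hi
    rcases i with _ | i
    · exact e0
    · have := (he 0 i (by omega)).1 (by omega)
      rw [← this]; congr 1; ring
  have het : e t = 2 * c := by
    have := (he 0 (t - 1) (by omega)).2.1 rfl
    rw [← this]; congr 1; omega
  set N := nbP a t * nbD (2 * c) * (nbP a t).transpose with hN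
  have hs : ∀ s, s ≤ t - 1 → nbP e (t + 1 + s) * (nbP a (t - s)).transpose = N := by
    intro s
    induction s with
    | zero => intro _; simp only [Nat.add_zero, Nat.sub_zero]; rw [nbP, hPt, het]
    | succ s ih =>
      intro hs
      have ih := ih (by omega)
      rw [show t - s = (t - (s + 1)) + 1 by omega, nbP, Matrix.transpose_mul, nbD_transpose,
        ← Matrix.mul_assoc] at ih
      rw [← Nat.add_assoc, nbP]
      have := (he 0 (t + s) (by omega)).2.2.1 (by omega) (by omega)
      rw [show 1 + 2 * t * 0 + (t + s) = t + 1 + s by ring,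
        show 2 * t - 1 - (t + s) = t - (s + 1) by omega] at this
      rw [this]; exact ih
  have hW : nbP e (2 * t) * nbD (a 0) = N := by
    have := hs (t - 1) le_rfl
    rw [show t + 1 + (t - 1) = 2 * t by omega, show t - (t - 1) = 1 by omega] at this
    simpa [nbP, nbD_transpose] using this
  set T : Matrix (Fin 2) (Fin 2) ℚ := !![1, a 0; 0, 1] with hT
  have hWT : nbP e (2 * t) * T = N * !![0, 1; 1, 0] := by
    rw [← hW, Matrix.mul_assoc]
    congr 1
    rw [hT, nbD]
    ext i j; fin_cases i <;> fin_cases j <;> simp [Matrix.mul_apply, Fin.sum_univ_two]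
  have hstep : ∀ j s, s + 1 ≤ 2 * t →
      nbP e (2 * t * (j + 1) + (s + 1)) = nbP e (2 * t * (j + 1)) * T * nbP e (s + 1) := by
    intro j s
    induction s with
    | zero =>
      intro _
      have := (he j (2 * t - 1) (by omega)).2.2.2 rfl
      rw [show 1 + 2 * t * j + (2 * t - 1) = 2 * t * (j + 1) by rw [mul_add]; omega] at this
      rw [Nat.zero_add, nbP, this, Matrix.mul_assoc, nbP, nbP, Matrix.one_mul, e0]
      congr 1
      rw [hT, nbD, nbD]
      ext i j; fin_cases i <;> fin_cases j <;> simp [Matrix.mul_apply, Fin.sum_univ_two]; ring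
    | succ s ih =>
      intro hs
      rw [← Nat.add_assoc, nbP, ih (by omega), nbP.eq_2 e (s + 1), ← Matrix.mul_assoc]
      congr 2
      have h1 := he (j + 1) s (by omega)
      have h2 := he 0 s (by omega)
      rw [show 2 * t * (j + 1) + (s + 1) = 1 + 2 * t * (j + 1) + s by ring,
        show s + 1 = 1 + 2 * t * 0 + s by ring]
      rcases lt_trichotomy s (t - 1) with h | h | h
      · rw [h1.1 h, h2.1 h]
      · rw [h1.2.1 h, h2.2.1 h]
      · rw [h1.2.2.1 h (by omega), h2.2.2.1 h (by omega)]
  have hfull : ∀ j, nbP e (2 * t * (j + 2)) = nbP e (2 * t * (j + 1)) * T * nbP e (2 * t) := by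
    intro j
    have := hstep j (2 * t - 1) (by omega)
    rw [show 2 * t - 1 + 1 = 2 * t by omega] at this
    rw [← this]; congr 1
  rw [← hWT]
  intro j
  induction j with
  | zero => rw [hfull 0]; simp
  | succ j ih =>
    rw [hfull (j + 1), show j + 1 + 1 = j + 2 by ring]
    conv_lhs => rw [ih]
    rw [hfull j]
    simp only [Matrix.mul_assoc]

/-- every nice BCF `(a_0, …, a_{t−1})` can be completed, with
`a_t = 2c` for some `c ∈ 𝒴` of arbitrarily negative `p`-adic valuation, to an
eventually periodic continued fraction
`[a_0; period (a_1, …, a_{t−1}, a_t, a_{t−1}, …, a_1, 2a_0)]` whose convergents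
tend `p`-adically to a limit `β` with `p^{2k_0}·m·β² = 1` for some integer `m`
prime to `p`; i.e. `β = 1/(p^{k_0}·√m)` in `ℚ_p`. -/
theorem nice_BCF_completion
    (p : ℕ) [Fact p.Prime] (hp : Odd p) (t : ℕ)
    (ta : ℕ → ℤ) (kk : ℕ → ℕ) (hnice : IsNiceBCF p t ta kk)
    (a : ℕ → ℚ) (ha : ∀ i, a i = (ta i : ℚ) / (p : ℚ) ^ (kk i))
    (M : ℕ) :
    ∃ c : ℚ, IsBrowkinDigit p c ∧ IsBrowkinDigit p (2 * c) ∧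
      padicValRat p (2 * c) < -(M : ℤ) ∧
      ∃ m : ℤ, ¬((p : ℤ) ∣ m) ∧
        ∀ e : ℕ → ℚ,
          e 0 = a 0 →
          (∀ j : ℕ, ∀ i < 2 * t,
            (i < t - 1 → e (1 + 2 * t * j + i) = a (i + 1)) ∧
            (i = t - 1 → e (1 + 2 * t * j + i) = 2 * c) ∧
            (t - 1 < i → i < 2 * t - 1 → e (1 + 2 * t * j + i) = a (2 * t - 1 - i)) ∧
            (i = 2 * t - 1 → e (1 + 2 * t * j + i) = 2 * a 0)) →
          ∀ A B : ℤ → ℚ, IsContinuants e A B →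
            ∃ β : ℚ_[p],
              Filter.Tendsto (fun nn : ℕ => ((A nn / B nn : ℚ) : ℚ_[p]))
                Filter.atTop (nhds β) ∧
              (p : ℚ_[p]) ^ (2 * kk 0) * (m : ℚ_[p]) * β ^ 2 = 1 := by
  have hpp : p.Prime := Fact.out
  have hp0 : (p : ℚ) ≠ 0 := by exact_mod_cast hpp.ne_zero
  have hppos : (0 : ℚ) < p := by exact_mod_cast hpp.pos
  obtain ⟨ht, hdig, h0, hb, q, ω, hq1, hq2, hq3⟩ := hnice
  obtain ⟨n, rfl⟩ : ∃ n, t = n + 1 := ⟨t - 1, by omega⟩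
  rw [Nat.add_sub_cancel] at hb
  have hdig' : ∀ i < n + 1, 1 ≤ kk i ∧ ¬((p : ℤ) ∣ ta i) := fun i hi =>
    ⟨(hdig i hi).1, (hdig i hi).2.1⟩
  have hA := (nb_coprimeA p hpp ta kk (n + 1) hdig' (n + 1)).1 le_rfl
  have hB := nb_coprimeB p hpp ta kk (n + 1) hdig' n le_rfl
  obtain ⟨δ, r, hδ, hdet⟩ := nb_det p ta kk n
  obtain ⟨S, hS⟩ := nbP_nice p hpp ta kk a ha n
  set At := niceAt p ta kk (n + 1)
  set At' := niceAt p ta kk n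
  set Bt := niceBt p ta kk (n + 1)
  set Bt' := niceBt p ta kk n
  have hA0 : At ≠ 0 := by intro h; rw [h] at hA; exact hA (dvd_zero _)
  have hη : (p : ℚ) ^ kk n * |(At' : ℚ)| / |(At : ℚ)| < p / 4 := by
    have hAq : (0 : ℚ) < |(At : ℚ)| := abs_pos.2 (by exact_mod_cast hA0)
    rw [abs_div, abs_mul, abs_of_pos (show (0:ℚ) < (p : ℚ) ^ kk n by positivity)] at hb
    have hx : 0 < (p : ℚ) ^ kk n * |(At' : ℚ)| := by
      by_contra hx
      have : (p : ℚ) ^ kk n * |(At' : ℚ)| = 0 := le_antisymm (not_lt.1 hx) (by positivity)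
      rw [this, div_zero] at hb
      have : 0 < 4 / (p : ℚ) := by positivity
      linarith
    rw [div_lt_div_iff₀ hppos hx] at hb
    rw [div_lt_div_iff₀ hAq (by norm_num)]
    linarith
  obtain ⟨c, m, k, hk, hcp, hmp, hcs, hX0, hm⟩ := nb_arith p hpp At At' Bt Bt' q δ ω r (kk n) (M + 1)
    hA hB hδ hdet hq1 hq2 hq3 hη
  have hpi : Prime (p : ℤ) := Nat.prime_iff_prime_int.mp hpp
  have hp2 : ¬ (p : ℤ) ∣ 2 := by
    intro h
    have h1 : p ∣ 2 := by exact_mod_cast h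
    have h2 := (Nat.prime_dvd_prime_iff_eq hpp Nat.prime_two).1 h1
    rw [h2] at hp; exact absurd hp (by decide)
  have h2z : ∀ z : ℤ, ¬ (p : ℤ) ∣ z → ¬ (p : ℤ) ∣ 2 * z := fun z hz h =>
    (hpi.dvd_or_dvd h).elim hp2 hz
  have hcabs : |(c : ℚ) / (p : ℚ) ^ k| < p / 4 := by
    rw [abs_div, abs_of_pos (show (0:ℚ) < (p : ℚ) ^ k by positivity)]; exact hcs
  obtain ⟨hc1, hc2⟩ := abs_lt.1 hcabs
  refine ⟨(c : ℚ) / (p : ℚ) ^ k, ⟨⟨c, k, rfl⟩, by linarith, by linarith⟩,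
    ⟨⟨2 * c, k, by push_cast; ring⟩, by linarith, by linarith⟩, ?_, m, hmp, ?_⟩
  · have hc0 : c ≠ 0 := by rintro rfl; exact hcp (dvd_zero _)
    have : (2 * ((c : ℚ) / (p : ℚ) ^ k)) = ((2 * c : ℤ) : ℚ) / (p : ℚ) ^ k := by push_cast; ring
    rw [this, padicValRat.div (by exact_mod_cast mul_ne_zero two_ne_zero hc0) (by positivity),
      padicValRat.of_int, padicValInt.eq_zero_of_not_dvd (h2z c hcp), padicValRat.pow,
      padicValRat.self hpp.one_lt]
    push_cast
    omega
  intro e e0 he A B hAB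
  have hen : ∀ i, 2 ≤ ‖(e (i + 1) : ℚ_[p])‖ := by
    intro i
    have hi : i = 2 * (n + 1) * (i / (2 * (n + 1))) + i % (2 * (n + 1)) := (Nat.div_add_mod _ _).symm
    have hlt : i % (2 * (n + 1)) < 2 * (n + 1) := Nat.mod_lt _ (by omega)
    obtain ⟨h1, h2, h3, h4⟩ := he (i / (2 * (n + 1))) (i % (2 * (n + 1))) hlt
    rw [show 1 + 2 * (n + 1) * (i / (2 * (n + 1))) + i % (2 * (n + 1)) = i + 1 by omega] at h1 h2 h3 h4
    have haa : ∀ l, l < n + 1 → 2 ≤ ‖(a l : ℚ_[p])‖ := by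
      intro l hl
      rw [ha]; exact nb_norm p _ _ (hdig' l hl).2 (hdig' l hl).1
    generalize i % (2 * (n + 1)) = s at *
    rcases lt_trichotomy s (n + 1 - 1) with h | h | h
    · rw [h1 h]; exact haa _ (by omega)
    · rw [h2 h, show (2 * ((c : ℚ) / (p : ℚ) ^ k)) = ((2 * c : ℤ) : ℚ) / (p : ℚ) ^ k by push_cast; ring]
      exact nb_norm p _ _ (h2z c hcp) (by omega)
    · by_cases h5 : s < 2 * (n + 1) - 1
      · rw [h3 h h5]; exact haa _ (by omega)
      · rw [h4 (by omega), ha, show (2 * ((ta 0 : ℚ) / (p : ℚ) ^ kk 0)) = ((2 * ta 0 : ℤ) : ℚ) / (p : ℚ) ^ kk 0 by push_cast; ring]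
        exact nb_norm p _ _ (h2z _ (hdig' 0 (by omega)).2) (hdig' 0 (by omega)).1
  obtain ⟨hBne, β, hβ⟩ := nb_conv p e A B hAB hen
  refine ⟨β, hβ, ?_⟩
  have hper := nb_period (n + 1) (by omega) a e _ e0 he
  have hcont := nbP_cont e A B hAB
  set cq : ℚ := (c : ℚ) / (p : ℚ) ^ k with hcq
  -- entries of the symmetric matrix
  obtain ⟨n11, n12, n22, hN, hn11, hn22⟩ : ∃ n11 n12 n22 : ℚ,
      (nbP a (n + 1) * nbD (2 * cq) * (nbP a (n + 1)).transpose) * !![0, 1; 1, 0]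
        = !![n12, n11; n22, n12] ∧
      n11 * (p : ℚ) ^ (2 * (S + kk n) + k) = 2 * (At * (c * At + (p : ℚ) ^ (k + kk n) * At')) ∧
      n22 * (p : ℚ) ^ (2 * (S + kk n) + k) =
        (p : ℚ) ^ (2 * kk 0) * (2 * (Bt * (c * Bt + (p : ℚ) ^ (k + kk n) * Bt'))) := by
    rw [hS]
    generalize hx : (At : ℚ) / (p : ℚ) ^ (S + kk n) = x
    generalize hy : (At' : ℚ) / (p : ℚ) ^ S = y
    generalize hz : (p : ℚ) ^ kk 0 * (Bt : ℚ) / (p : ℚ) ^ (S + kk n) = z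
    generalize hw : (p : ℚ) ^ kk 0 * (Bt' : ℚ) / (p : ℚ) ^ S = w
    refine ⟨2 * x * (cq * x + y), 2 * cq * x * z + x * w + y * z, 2 * z * (cq * z + w), ?_, ?_, ?_⟩
    · have htr : (!![x, y; z, w] : Matrix (Fin 2) (Fin 2) ℚ).transpose = !![x, z; y, w] := by
        ext i j; fin_cases i <;> fin_cases j <;> rfl
      rw [nbD, htr]
      ext i j; fin_cases i <;> fin_cases j <;>
        simp [Matrix.mul_apply, Fin.sum_univ_two] <;> ring
    · rw [← hx, ← hy, hcq]
      simp only [pow_add, pow_mul, two_mul]; field_simp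
    · rw [← hz, ← hw, hcq]
      simp only [pow_add, pow_mul, two_mul]; field_simp
  rw [hN] at hper
  have hrel : n22 = (p : ℚ) ^ (2 * kk 0) * m * n11 := by
    have hmq : (At : ℚ) * (c * At + (p : ℚ) ^ (k + kk n) * At') * m
        = Bt * (c * Bt + (p : ℚ) ^ (k + kk n) * Bt') := by exact_mod_cast hm
    have hne : (p : ℚ) ^ (2 * (S + kk n) + k) ≠ 0 := pow_ne_zero _ hp0
    apply mul_right_cancel₀ hne
    linear_combination hn22 - (p : ℚ) ^ (2 * kk 0) * m * hn11 - 2 * (p : ℚ) ^ (2 * kk 0) * hmq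
  have hn0 : n11 ≠ 0 := by
    rintro rfl
    rw [zero_mul] at hn11
    have h1 : (At : ℚ) ≠ 0 := by exact_mod_cast hA0
    have h2 : ((c : ℚ) * At + (p : ℚ) ^ (k + kk n) * At') ≠ 0 := by exact_mod_cast hX0
    exact (mul_ne_zero two_ne_zero (mul_ne_zero h1 h2)) hn11.symm
  -- recurrence for the subsequence
  let u : ℕ → ℕ := fun j => 2 * (n + 1) * (j + 1) - 1
  have hu : ∀ j, u j + 1 = 2 * (n + 1) * (j + 1) := by
    intro j
    have : 0 < 2 * (n + 1) * (j + 1) := by positivity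
    simp only [u]; omega
  have hutend : Filter.Tendsto u Filter.atTop Filter.atTop := by
    apply Filter.tendsto_atTop_mono (f := fun j => j) _ Filter.tendsto_id
    intro j
    have := hu j
    nlinarith
  let R : ℕ → ℚ_[p] := fun nn => ((A nn / B nn : ℚ) : ℚ_[p])
  have hR : ∀ j, R (u (j + 1)) * (n22 * R (u j) + n12) = n12 * R (u j) + n11 := by
    intro j
    have h1 := hper j
    rw [show j + 2 = (j + 1) + 1 by ring, ← hu, ← hu, hcont, hcont] at h1
    have hAA := congrFun (congrFun h1 0) 0
    have hBB := congrFun (congrFun h1 1) 0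
    simp [Matrix.mul_apply, Fin.sum_univ_two] at hAA hBB
    have hb1 := hBne (u (j + 1))
    have hb2 := hBne (u j)
    have : A (u (j + 1)) / B (u (j + 1)) * (n22 * (A (u j) / B (u j)) + n12)
        = n12 * (A (u j) / B (u j)) + n11 := by
      have e1 : n22 * (A (u j) / B (u j)) + n12 = B (u (j + 1)) / B (u j) := by
        rw [hBB]; field_simp
      rw [e1, div_mul_div_cancel₀ hb1, hAA]; field_simp
    simp only [R]
    exact_mod_cast congrArg (fun x : ℚ => (x : ℚ_[p])) this
  have hβ1 : Filter.Tendsto (fun j => R (u j)) Filter.atTop (nhds β) := hβ.comp hutend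
  have hβ2 : Filter.Tendsto (fun j => R (u (j + 1))) Filter.atTop (nhds β) :=
    hβ1.comp (Filter.tendsto_add_atTop_nat 1)
  have hlim := tendsto_nhds_unique
    ((hβ2.mul ((hβ1.const_mul (n22 : ℚ_[p])).add_const (n12 : ℚ_[p]))).congr hR)
    ((hβ1.const_mul (n12 : ℚ_[p])).add_const (n11 : ℚ_[p]))
  have hn0' : (n11 : ℚ_[p]) ≠ 0 := by exact_mod_cast hn0
  have hrel' : (n22 : ℚ_[p]) = (p : ℚ_[p]) ^ (2 * kk 0) * m * n11 := by
    rw [hrel]; push_cast; ring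
  apply mul_right_cancel₀ hn0'
  rw [hrel'] at hlim
  linear_combination hlim
end

section
/- Let p ≥ 3 be a prime and t ≥ 2 an integer. Consider the infinite eventually periodic continued fraction with partial quotients a_0 = (p²−1)/(2p) and, for every j ≥ 0, a_{4j+1} = −2/p, a_{4j+2} = −1/p^{t−1}, a_{4j+3} = 2/p, a_{4j+4} = −1/p. Then the convergents A_n/B_n of this continued fraction converge in ℚ_p to a limit β satisfying 4p²·β² = 1 − p^{t+2}; that is, β = ±√(1−p^{t+2})/(2p) for a square root of 1 − p^{t+2} in ℚ_p. -/
/-- A continued fraction with all partial quotients of norm at least three converges. -/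
lemma cf_aux_conv (p : ℕ) [Fact p.Prime] (α F G : ℕ → ℚ_[p])
    (hα : ∀ n, 3 ≤ ‖α n‖) (hF0 : F 0 = 1) (hG0 : G 0 = 0) (hG1 : G 1 = 1)
    (hF : ∀ n, F (n+2) = α n * F (n+1) + F n)
    (hG : ∀ n, G (n+2) = α n * G (n+1) + G n) :
    (∀ n, 2 ^ n ≤ ‖G (n+1)‖) ∧
    ∃ β, Filter.Tendsto (fun n : ℕ => F (n+1) / G (n+1)) Filter.atTop (nhds β) := by
  have h1 : ∀ n, 2 ^ n ≤ ‖G (n+1)‖ ∧ ‖G n‖ ≤ ‖G (n+1)‖ := by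
    intro n
    induction n with
    | zero => simp [hG0, hG1]
    | succ k ih =>
      obtain ⟨i1, i2⟩ := ih
      have h3 : 3 * ‖G (k+1)‖ ≤ ‖α k * G (k+1)‖ := by
        rw [norm_mul]
        exact mul_le_mul_of_nonneg_right (hα k) (norm_nonneg _)
      have h4 : ‖α k * G (k+1)‖ ≤ ‖G (k+2)‖ + ‖G k‖ := by
        have : α k * G (k+1) = G (k+2) - G k := by rw [hG]; ring
        rw [this]
        exact norm_sub_le _ _
      have h5 := norm_nonneg (G (k+1))
      constructor
      · show _ ≤ ‖G (k+2)‖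
        rw [pow_succ]; linarith
      · show _ ≤ ‖G (k+2)‖
        linarith
  refine ⟨fun n => (h1 n).1, ?_⟩
  have hpos : ∀ n, 0 < ‖G (n+1)‖ := fun n => lt_of_lt_of_le (by positivity) (h1 n).1
  have hne : ∀ n, G (n+1) ≠ 0 := fun n => norm_pos_iff.1 (hpos n)
  have hdet : ∀ n, ‖F (n+1) * G n - F n * G (n+1)‖ = 1 := by
    intro n
    induction n with
    | zero => simp [hF0, hG0, hG1]
    | succ k ih =>
      rw [hF, hG, ← ih, ← norm_neg]
      congr 1
      ring
  apply cauchySeq_tendsto_of_complete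
  apply cauchySeq_of_le_geometric (1/2) 1 (by norm_num)
  intro n
  rw [dist_eq_norm, div_sub_div _ _ (hne n) (hne (n+1)), norm_div, norm_mul]
  have : ‖F (n+1) * G (n+1+1) - G (n+1) * F (n+1+1)‖ = 1 := by
    rw [← hdet (n+1), ← norm_neg]; congr 1; ring
  rw [this, one_mul, div_pow, one_pow]
  apply one_div_le_one_div_of_le (by positivity)
  have a1 := (h1 n).1
  have a2 : (1:ℝ) ≤ ‖G (n+1+1)‖ := le_trans (one_le_pow₀ (by norm_num)) (h1 (n+1)).1
  nlinarith [hpos n]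

theorem periodic_cf_sqrt_one_sub_p_pow
    (p : ℕ) [Fact p.Prime] (hp3 : 3 ≤ p) (t : ℕ) (ht : 2 ≤ t)
    (a : ℕ → ℚ)
    (ha0 : a 0 = ((p : ℚ) ^ 2 - 1) / (2 * p))
    (ha : ∀ j : ℕ, a (4 * j + 1) = -2 / (p : ℚ) ∧
      a (4 * j + 2) = -1 / (p : ℚ) ^ (t - 1) ∧
      a (4 * j + 3) = 2 / (p : ℚ) ∧
      a (4 * j + 4) = -1 / (p : ℚ))
    (A B : ℤ → ℚ) (hAB : IsContinuants a A B) :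
    ∃ β : ℚ_[p],
      Filter.Tendsto (fun n : ℕ => ((A n / B n : ℚ) : ℚ_[p]))
        Filter.atTop (nhds β) ∧
      4 * (p : ℚ_[p]) ^ 2 * β ^ 2 = 1 - (p : ℚ_[p]) ^ (t + 2) := by
  obtain ⟨hA1, hA0, hB1, hB0, hrec⟩ := hAB
  obtain ⟨s, rfl⟩ : ∃ s, t = s + 2 := ⟨t - 2, by omega⟩
  rw [show s + 2 - 1 = s + 1 by omega] at ha
  have hp0 : (p : ℚ_[p]) ≠ 0 := by
    exact_mod_cast (show p ≠ 0 by omega)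
  have hpR : (3 : ℝ) ≤ p := by exact_mod_cast hp3
  have hn2 : ‖(2 : ℚ_[p])‖ = 1 := by
    have : ‖((2 : ℕ) : ℚ_[p])‖ = 1 := by
      rw [Padic.norm_natCast_eq_one_iff]
      exact (Nat.coprime_primes Fact.out Nat.prime_two).2 (by omega)
    simpa using this
  let α : ℕ → ℚ_[p] := fun n => ((a (n+1) : ℚ) : ℚ_[p])
  let F : ℕ → ℚ_[p] := fun n => ((A ((n:ℤ)-1) : ℚ) : ℚ_[p])
  let G : ℕ → ℚ_[p] := fun n => ((B ((n:ℤ)-1) : ℚ) : ℚ_[p])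
  have hF : ∀ n, F (n+2) = α n * F (n+1) + F n := by
    intro n
    have := (hrec (n+1) (by omega)).1
    simp only [F, α]
    rw [show (((n+2 : ℕ) : ℤ) - 1) = ((n+1 : ℕ) : ℤ) by push_cast; ring, this,
      show (((n+1 : ℕ) : ℤ) - 2) = (n:ℤ) - 1 by push_cast; ring]
    push_cast; rfl
  have hG : ∀ n, G (n+2) = α n * G (n+1) + G n := by
    intro n
    have := (hrec (n+1) (by omega)).2
    simp only [G, α]
    rw [show (((n+2 : ℕ) : ℤ) - 1) = ((n+1 : ℕ) : ℤ) by push_cast; ring, this,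
      show (((n+1 : ℕ) : ℤ) - 2) = (n:ℤ) - 1 by push_cast; ring]
    push_cast; rfl
  have e1 : ∀ j, α (4*j) = -2 / (p : ℚ_[p]) := fun j => by
    simp only [α]; rw [(ha j).1]; push_cast; rfl
  have e2 : ∀ j, α (4*j+1) = -1 / (p : ℚ_[p])^(s+1) := fun j => by
    simp only [α]; rw [(ha j).2.1]; push_cast; rfl
  have e3 : ∀ j, α (4*j+2) = 2 / (p : ℚ_[p]) := fun j => by
    simp only [α]; rw [(ha j).2.2.1]; push_cast; rfl
  have e4 : ∀ j, α (4*j+3) = -1 / (p : ℚ_[p]) := fun j => by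
    simp only [α]; rw [(ha j).2.2.2]; push_cast; rfl
  have hα : ∀ n, 3 ≤ ‖α n‖ := by
    intro n
    have hpp : (3:ℝ) ≤ (p:ℝ)^(s+1) :=
      hpR.trans (le_self_pow₀ (by linarith) (by omega))
    obtain ⟨j, h | h | h | h⟩ : ∃ j, n = 4*j ∨ n = 4*j+1 ∨ n = 4*j+2 ∨ n = 4*j+3 :=
      ⟨n/4, by omega⟩
    · rw [h, e1]; simpa [hn2] using hpR
    · rw [h, e2, norm_div, norm_neg, norm_one, norm_pow, Padic.norm_p, inv_pow, one_div, inv_inv]; exact hpp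
    · rw [h, e3]; simpa [hn2] using hpR
    · rw [h, e4]; simpa using hpR
  have hF0 : F 0 = 1 := by simp [F, hA1]
  have hG0 : G 0 = 0 := by simp [G, hB1]
  have hG1 : G 1 = 1 := by simp [G, hB0]
  have hF1 : F 1 = ((p : ℚ_[p])^2 - 1) / (2 * p) := by
    simp [F, hA0, ha0]
  obtain ⟨hgrow, β, hβ⟩ := cf_aux_conv p α F G hα hF0 hG0 hG1 hF hG
  have h20 : (2 : ℚ_[p]) ≠ 0 := by norm_num
  refine ⟨β, ?_, ?_⟩
  · refine hβ.congr fun n => ?_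
    simp [F, G]
  have hinv : ∀ j : ℕ,
      (4 * (p : ℚ_[p])^2 * F (4*j) ^ 2 - (1 - (p : ℚ_[p])^(s+4)) * G (4*j)^2 = 4 * (p:ℚ_[p])^2) ∧
      (4 * (p : ℚ_[p])^2 * (F (4*j) * F (4*j+1)) - (1 - (p : ℚ_[p])^(s+4)) * (G (4*j) * G (4*j+1))
        = 2 * p * ((p:ℚ_[p])^2 - 1)) ∧
      (4 * (p : ℚ_[p])^2 * F (4*j+1) ^ 2 - (1 - (p : ℚ_[p])^(s+4)) * G (4*j+1)^2
        = (p:ℚ_[p])^4 - 2 * (p:ℚ_[p])^2 + (p:ℚ_[p])^(s+4)) := by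
    intro j
    induction j with
    | zero =>
      simp only [mul_zero, zero_add, hF0, hG0, hG1, hF1]
      refine ⟨by ring, by field_simp; ring, by field_simp; ring⟩
    | succ j ih =>
      obtain ⟨c1, c2, c3⟩ := ih
      have f2 := hF (4*j)
      have f3 := hF (4*j+1)
      have f4 := hF (4*j+2)
      have f5 := hF (4*j+3)
      have g2 := hG (4*j)
      have g3 := hG (4*j+1)
      have g4 := hG (4*j+2)
      have g5 := hG (4*j+3)
      simp only [e1, e2, e3, e4, add_assoc, Nat.reduceAdd] at f2 f3 f4 f5 g2 g3 g4 g5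
      rw [show 4 * (j+1) = 4*j+4 by ring, show 4*j+4+1 = 4*j+5 by ring]
      generalize F (4*j) = w at *
      generalize F (4*j+1) = v at *
      generalize G (4*j) = w' at *
      generalize G (4*j+1) = v' at *
      have hq : (p : ℚ_[p])^(s+4) = p^3 * p^(s+1) := by ring
      rw [hq] at c1 c2 c3 ⊢
      clear hq
      have hq0 : (p : ℚ_[p])^(s+1) ≠ 0 := pow_ne_zero _ hp0
      generalize (p : ℚ_[p])^(s+1) = q at *
      generalize (p : ℚ_[p]) = r at *
      -- coefficients
      have lin4 : ∀ x v w x3 x4 : ℚ_[p], x = -2/r * v + w → x3 = -1/q * x + v →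
          x4 = 2/r * x3 + x → x4 = (2/r * (-1/q * (-2/r) + 1) + -2/r) * v + (2/r * (-1/q) + 1) * w := by
        intro x v w x3 x4 h1 h2 h3
        rw [h3, h2, h1]; ring
      have lin5 : ∀ x v w x3 x4 x5 : ℚ_[p], x = -2/r * v + w → x3 = -1/q * x + v →
          x4 = 2/r * x3 + x → x5 = -1/r * x4 + x3 →
          x5 = (-1/r * (2/r * (-1/q * (-2/r) + 1) + -2/r) + (-1/q * (-2/r) + 1)) * v
            + (-1/r * (2/r * (-1/q) + 1) + -1/q) * w := by
        intro x v w x3 x4 x5 h1 h2 h3 h4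
        rw [h4, h3, h2, h1]; ring
      have F4 := lin4 _ _ _ _ _ f2 f3 f4
      have G4 := lin4 _ _ _ _ _ g2 g3 g4
      have F5 := lin5 _ _ _ _ _ _ f2 f3 f4 f5
      have G5 := lin5 _ _ _ _ _ _ g2 g3 g4 g5
      rw [F4, G4, F5, G5]
      obtain ⟨x, hx⟩ : ∃ x, x = (2/r * (-1/q * (-2/r) + 1) + -2/r) := ⟨_, rfl⟩
      obtain ⟨y, hy⟩ : ∃ y, y = (2/r * (-1/q) + 1) := ⟨_, rfl⟩
      obtain ⟨z, hz⟩ : ∃ z, z = (-1/r * (2/r * (-1/q * (-2/r) + 1) + -2/r) + (-1/q * (-2/r) + 1)) := ⟨_, rfl⟩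
      obtain ⟨u, hu⟩ : ∃ u, u = (-1/r * (2/r * (-1/q) + 1) + -1/q) := ⟨_, rfl⟩
      rw [← hz, ← hu, ← hx, ← hy]
      refine ⟨?_, ?_, ?_⟩
      · trans x^2 * (r^4 - 2*r^2 + r^3*q) + 2*x*y*(2*r*(r^2-1)) + y^2*(4*r^2)
        · linear_combination x^2 * c3 + 2*x*y*c2 + y^2*c1
        · rw [hx, hy]; field_simp; ring
      · trans x*z * (r^4 - 2*r^2 + r^3*q) + (x*u+y*z)*(2*r*(r^2-1)) + y*u*(4*r^2)
        · linear_combination x*z * c3 + (x*u+y*z)*c2 + y*u*c1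
        · rw [hx, hy, hz, hu]; field_simp; ring
      · trans z^2 * (r^4 - 2*r^2 + r^3*q) + 2*z*u*(2*r*(r^2-1)) + u^2*(4*r^2)
        · linear_combination z^2 * c3 + 2*z*u*c2 + u^2*c1
        · rw [hz, hu]; field_simp; ring
  have hsub : Filter.Tendsto (fun j : ℕ => 4 * j) Filter.atTop Filter.atTop :=
    Filter.tendsto_id.const_mul_atTop' (by norm_num)
  have l1 : Filter.Tendsto (fun j : ℕ => 4 * (p : ℚ_[p])^2 * (F (4*j+1) / G (4*j+1))^2
      - (1 - (p : ℚ_[p])^(s+4))) Filter.atTop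
      (nhds (4 * (p : ℚ_[p])^2 * β^2 - (1 - (p : ℚ_[p])^(s+4)))) :=
    (((hβ.comp hsub).pow 2).const_mul _).sub_const _
  have hinvG : Filter.Tendsto (fun n : ℕ => (G (n+1))⁻¹) Filter.atTop (nhds 0) := by
    apply squeeze_zero_norm (a := fun n : ℕ => ((1/2 : ℝ))^n)
    · intro n
      rw [norm_inv, one_div, inv_pow]
      exact inv_anti₀ (by positivity) (hgrow n)
    · exact tendsto_pow_atTop_nhds_zero_of_lt_one (by norm_num) (by norm_num)
  have l2 := (((hinvG.comp hsub).pow 2).const_mul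
    ((p:ℚ_[p])^4 - 2 * (p:ℚ_[p])^2 + (p:ℚ_[p])^(s+4)))
  have l3 := l2.congr (f₂ := fun j : ℕ => 4 * (p : ℚ_[p])^2 * (F (4*j+1) / G (4*j+1))^2
      - (1 - (p : ℚ_[p])^(s+4))) (fun j => by
    have hne : G (4*j+1) ≠ 0 :=
      norm_pos_iff.1 (lt_of_lt_of_le (by positivity) (hgrow (4*j)))
    simp only [Function.comp]
    rw [← (hinv j).2.2]
    field_simp)
  have := tendsto_nhds_unique l1 l3
  rw [zero_pow two_ne_zero, mul_zero] at this
  exact sub_eq_zero.1 this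
end
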